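/- arXiv:2502.03768 — 3 statements merged into one kernel-verified Lean document; each statement's English description precedes it below -/
import Mathlib

section
/- For every 0 ≤ k ≤ N−1, the right action of the product B_{N−1}(σ_1) B_{N−2}(σ_2) ⋯ B_1(σ_{N−1}) on the dual basis vector ⟨1,2,…,k,0,k+1,…,N−1| satisfies ⟨1,2,…,k,0,k+1,…,N−1| B_{N−1}(σ_1) ⋯ B_1(σ_{N−1}) = G^β_{ρ_k^{−1} ω_N}(σ_1,…,σ_{N−1}; ⊖t_1,…,⊖t_{N−1}) ⟨Ω|, where ρ_k := s_1 s_2 ⋯ s_k ∈ S_N (ρ_0 = id) and ω_N ∈ S_N is the longest permutation. -/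
noncomputable section
open scoped BigOperators

variable {F : Type*}

/-- `x ⊖ y := (x - y)/(1 + β·y)`. -/
def om [Field F] (β x y : F) : F := (x - y) / (1 + β * y)

/-- `⊖ t := -t/(1 + β·t)`. -/
def negOm [Field F] (β t : F) : F := (-t) / (1 + β * t)

/-- The R-matrix `R^{(n)}(x,y)` on `V ⊗ V`, `V = F^n`, with entries
`R_{ij,kl} = (1 + [k<l]·β(x⊖y)) δ_{il} δ_{jk} + [k>l]·(x⊖y) δ_{ik} δ_{jl}`;
the row index is the pair `(i,j)`, the column index is the pair `(k,l)`. -/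
def Rmat [Field F] (n : ℕ) (β x y : F) :
    Matrix (Fin n × Fin n) (Fin n × Fin n) F := Matrix.of fun p q =>
  (if p.1 = q.2 ∧ p.2 = q.1 then (if q.1 < q.2 then 1 + β * om β x y else 1) else 0) +
  (if p.1 = q.1 ∧ p.2 = q.2 ∧ q.2 < q.1 then om β x y else 0)

/-- `R_{a i}(u, τ)` : the R-matrix acting on the auxiliary space (first factor)
and the `i`-th site of `H = (F^n)^{⊗N}`, identity elsewhere. -/
def Rsite [Field F] (n N : ℕ) (β u τ : F) (i : Fin N) :
    Matrix (Fin n × (Fin N → Fin n)) (Fin n × (Fin N → Fin n)) F := Matrix.of fun p q =>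
  Rmat n β u τ (p.1, p.2 i) (q.1, q.2 i) *
    (if ∀ j, j ≠ i → p.2 j = q.2 j then 1 else 0)

/-- The monodromy matrix `T_a(u) = R_{aN}(u,t_N) ⋯ R_{a1}(u,t_1)` on `V_a ⊗ H`. -/
def Tmono [Field F] (n N : ℕ) (β u : F) (t : Fin N → F) :
    Matrix (Fin n × (Fin N → Fin n)) (Fin n × (Fin N → Fin n)) F :=
  ((List.ofFn fun i : Fin N => Rsite n N β u (t i) i).reverse).prod

/-- The block `T_a(u)_{r c}` (with respect to the auxiliary space) as an operator on `H`. -/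
def blockOp [Field F] (n N : ℕ) (β u : F) (t : Fin N → F) (r c : Fin n) :
    Matrix (Fin N → Fin n) (Fin N → Fin n) F :=
  Matrix.of fun s s' => Tmono n N β u t (r, s) (c, s')

/-- The natural basis vector `|n_1,…,n_N⟩` of `H` (also used as a dual basis covector). -/
def ket [Field F] (n N : ℕ) (g : Fin N → Fin n) : (Fin N → Fin n) → F :=
  fun s => if s = g then 1 else 0

/-- The Coxeter length of a permutation: its number of inversions. -/
def permLength {N : ℕ} (w : Equiv.Perm (Fin N)) : ℕ :=
  (Finset.univ.filter fun p : Fin N × Fin N => p.1 < p.2 ∧ w p.2 < w p.1).card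

/-- The longest permutation `ω_N : i ↦ N - 1 - i`. -/
def omegaPerm (N : ℕ) : Equiv.Perm (Fin N) :=
  ⟨Fin.rev, Fin.rev, fun i => Fin.rev_rev i, fun i => Fin.rev_rev i⟩

/-- `IsGroth M β G` says that the family `G`, indexed by `S_{M+1}`, satisfies the
defining recursion of the double β-Grothendieck polynomials:
`G_{ω}(x;y) = ∏_{i+j ≤ M+1} (x_i + y_j + β x_i y_j)` (1-based indices), and
`G_{w s_i}(x;y) = ∂^β_i G_w(x;y)` whenever `ℓ(w s_i) = ℓ(w) - 1`
(the β-divided difference acting on the x-variables). -/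
def IsGroth [Field F] (M : ℕ) (β : F)
    (G : Equiv.Perm (Fin (M + 1)) → (Fin (M + 1) → F) → (Fin (M + 1) → F) → F) : Prop :=
  (∀ x y : Fin (M + 1) → F,
      G (omegaPerm (M + 1)) x y =
        ∏ p ∈ Finset.univ.filter
            (fun p : Fin (M + 1) × Fin (M + 1) => (p.1 : ℕ) + (p.2 : ℕ) + 2 ≤ M + 1),
          (x p.1 + y p.2 + β * x p.1 * y p.2)) ∧
  (∀ (w : Equiv.Perm (Fin (M + 1))) (i : Fin M) (x y : Fin (M + 1) → F),
      permLength (w * Equiv.swap i.castSucc i.succ) + 1 = permLength w →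
      x i.castSucc ≠ x i.succ →
      G (w * Equiv.swap i.castSucc i.succ) x y =
        ((1 + β * x i.succ) * G w x y -
            (1 + β * x i.castSucc) * G w (fun j => x (Equiv.swap i.castSucc i.succ j)) y) /
          (x i.castSucc - x i.succ))

/-- The product `B_{N-1}(σ_1) B_{N-2}(σ_2) ⋯ B_1(σ_{N-1})` for `n = N = M+2`. -/
def descB [Field F] (M : ℕ) (β : F) (t : Fin (M + 2) → F) (σ : Fin (M + 1) → F) :
    Matrix (Fin (M + 2) → Fin (M + 2)) (Fin (M + 2) → Fin (M + 2)) F :=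
  (List.ofFn fun a : Fin (M + 1) =>
      blockOp (M + 2) (M + 2) β (σ a) t 0 (Fin.rev a).succ).prod

/-- The permutation `ρ_k = s_1 s_2 ⋯ s_k ∈ S_{M+2}` (`ρ_0 = 1`). -/
def rhoPerm (M k : ℕ) (hk : k ≤ M + 1) : Equiv.Perm (Fin (M + 2)) :=
  (List.ofFn fun i : Fin k =>
      Equiv.swap (⟨i, by have := i.isLt; omega⟩ : Fin (M + 2))
        ⟨(i : ℕ) + 1, by have := i.isLt; omega⟩).prod

section helpers

theorem rsite_row [Field F] (n N : ℕ) (β u τ : F) (i : Fin N) (a : Fin n) (s : Fin N → Fin n)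
    (f : Fin n × (Fin N → Fin n) → F) :
    ∑ q, Rsite n N β u τ i (a, s) q * f q =
      (if s i < a then 1 + β * om β u τ else 1) * f (s i, Function.update s i a) +
      (if s i < a then om β u τ * f (a, s) else 0) := by
  have h : ∀ q : Fin n × (Fin N → Fin n), Rsite n N β u τ i (a, s) q * f q =
      (if q = (s i, Function.update s i a) then
        (if s i < a then 1 + β * om β u τ else 1) * f (s i, Function.update s i a) else 0) +
      (if q = (a, s) then (if s i < a then om β u τ * f (a, s) else 0) else 0) := by
    rintro ⟨b, s'⟩
    have e1 : ((b, s') = (s i, Function.update s i a)) ↔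
        (a = s' i ∧ s i = b) ∧ (∀ j, j ≠ i → s j = s' j) := by
      rw [Prod.mk.injEq]
      constructor
      · rintro ⟨rfl, rfl⟩
        refine ⟨⟨by simp, rfl⟩, fun j hj => by simp [hj]⟩
      · rintro ⟨⟨h1, h2⟩, h3⟩
        refine ⟨h2.symm, ?_⟩
        funext j
        by_cases hj : j = i
        · subst hj; simp [h1]
        · simp [hj, h3 j hj]
    have e2 : ((b, s') = (a, s)) ↔
        (a = b ∧ s i = s' i) ∧ (∀ j, j ≠ i → s j = s' j) := by
      rw [Prod.mk.injEq]
      constructor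
      · rintro ⟨rfl, rfl⟩
        simp
      · rintro ⟨⟨h1, h2⟩, h3⟩
        refine ⟨h1.symm, ?_⟩
        funext j
        by_cases hj : j = i
        · subst hj; simp [h2]
        · simp [h3 j hj]
    have t1 : (if (b, s') = (s i, Function.update s i a) then
        (if s i < a then 1 + β * om β u τ else 1) * f (s i, Function.update s i a) else 0) =
        (if (b, s') = (s i, Function.update s i a) then
        (if s i < a then 1 + β * om β u τ else 1) * f (b, s') else 0) := by
      split_ifs with h1 <;> simp [h1]
    have t2 : (if (b, s') = (a, s) then (if s i < a then om β u τ * f (a, s) else 0) else 0) =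
        (if (b, s') = (a, s) then (if s i < a then om β u τ * f (b, s') else 0) else 0) := by
      split_ifs with h1 <;> simp [h1]
    rw [t1, t2]
    simp only [e1, e2]
    simp only [Rsite, Rmat, Matrix.of_apply]
    by_cases h3 : ∀ j, j ≠ i → s j = s' j
    · rw [if_pos h3, mul_one, add_mul]
      congr 1
      · by_cases h1 : a = s' i ∧ s i = b
        · have k1 : (a = s' i ∧ s i = b) ∧ ∀ j, j ≠ i → s j = s' j := ⟨h1, h3⟩
          rw [if_pos h1, if_pos k1]
          simp only [← h1.1, h1.2]
        · have k1 : ¬ ((a = s' i ∧ s i = b) ∧ ∀ j, j ≠ i → s j = s' j) := fun h => h1 h.1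
          rw [if_neg h1, if_neg k1, zero_mul]
      · by_cases h1 : a = b ∧ s i = s' i
        · have k1 : (a = b ∧ s i = s' i) ∧ ∀ j, j ≠ i → s j = s' j := ⟨h1, h3⟩
          rw [if_pos k1]
          simp [h1.1, h1.2]
        · have k1 : ¬ ((a = b ∧ s i = s' i) ∧ ∀ j, j ≠ i → s j = s' j) := fun h => h1 h.1
          have k2 : ¬ (a = b ∧ s i = s' i ∧ s' i < b) := fun h => h1 ⟨h.1, h.2.1⟩
          rw [if_neg k1, if_neg k2, zero_mul]
    · have n1 : ¬ ((a = s' i ∧ s i = b) ∧ ∀ j, j ≠ i → s j = s' j) := fun h => h3 h.2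
      have n2 : ¬ ((a = b ∧ s i = s' i) ∧ ∀ j, j ≠ i → s j = s' j) := fun h => h3 h.2
      rw [if_neg h3, if_neg n1, if_neg n2]
      simp
  rw [Finset.sum_congr rfl (fun q _ => h q), Finset.sum_add_distrib]
  simp

/-- partial monodromy -/
def pmono [Field F] (n N : ℕ) (β u : F) (t : Fin N → F) :
    ℕ → Matrix (Fin n × (Fin N → Fin n)) (Fin n × (Fin N → Fin n)) F
  | 0 => 1
  | m + 1 => (if h : m < N then Rsite n N β u (t ⟨m, h⟩) ⟨m, h⟩ else 1) * pmono n N β u t m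

theorem tmono_eq [Field F] (n N : ℕ) (β u : F) (t : Fin N → F) :
    Tmono n N β u t = pmono n N β u t N := by
  have key : ∀ m (hm : m ≤ N), ((List.ofFn fun i : Fin m =>
      Rsite n N β u (t (Fin.castLE hm i)) (Fin.castLE hm i)).reverse).prod =
      pmono n N β u t m := by
    intro m
    induction m with
    | zero => intro _; simp [pmono]
    | succ m ih =>
      intro hm
      rw [List.ofFn_succ', List.concat_eq_append, List.reverse_append]
      simp only [List.reverse_cons, List.reverse_nil, List.nil_append, List.prod_append,
        List.prod_cons, List.prod_nil, mul_one]
      rw [pmono, dif_pos (show m < N by omega), ← ih (by omega)]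
      rfl
  exact key N le_rfl

theorem pmono_succ_apply [Field F] (n N : ℕ) (β u : F) (t : Fin N → F) (m : ℕ) (h : m < N)
    (a : Fin n) (s : Fin N → Fin n) (z : Fin n × (Fin N → Fin n)) :
    pmono n N β u t (m + 1) (a, s) z =
      (if s ⟨m, h⟩ < a then 1 + β * om β u (t ⟨m, h⟩) else 1) *
        pmono n N β u t m (s ⟨m, h⟩, Function.update s ⟨m, h⟩ a) z +
      (if s ⟨m, h⟩ < a then om β u (t ⟨m, h⟩) * pmono n N β u t m (a, s) z else 0) := by
  rw [pmono, dif_pos h, Matrix.mul_apply]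
  exact rsite_row n N β u (t ⟨m, h⟩) ⟨m, h⟩ a s (fun q => pmono n N β u t m q z)

theorem pmono_zero_of_lt [Field F] (n N : ℕ) (β u : F) (t : Fin N → F) (c : Fin n)
    (s' : Fin N → Fin n) (m : ℕ) : ∀ (hm : m ≤ N) (a : Fin n) (s : Fin N → Fin n), a < c →
    (∀ j : Fin N, (j : ℕ) < m → s j < c) → pmono n N β u t m (a, s) (c, s') = 0 := by
  induction m with
  | zero =>
    intro _ a s ha _
    rw [pmono, Matrix.one_apply_ne]
    intro h
    exact ha.ne (Prod.mk.inj h).1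
  | succ m ih =>
    intro hm a s ha hs
    have hm' : m < N := by omega
    rw [pmono_succ_apply n N β u t m hm',
      ih (by omega) _ _ (hs ⟨m, hm'⟩ (Nat.lt_succ_self m)) ?_,
      ih (by omega) a s ha (fun j hj => hs j (by omega))]
    · simp
    · intro j hj
      rw [Function.update_of_ne (by intro h; rw [h] at hj; simp at hj)]
      exact hs j (by omega)

/-- the weight of one particle line -/
def wt [Field F] (N : ℕ) (β u : F) (t : Fin N → F) (m : ℕ) : F :=
  ∏ j : Fin N, if (j : ℕ) < m then om β u (t j) else 1

theorem prod_lt_succ [Field F] (N : ℕ) (g : Fin N → F) (m : ℕ) (h : m < N) :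
    (∏ j : Fin N, if (j : ℕ) < m + 1 then g j else 1) =
      g ⟨m, h⟩ * ∏ j : Fin N, if (j : ℕ) < m then g j else 1 := by
  have : ∀ j : Fin N, (if (j : ℕ) < m + 1 then g j else 1) =
      (if j = ⟨m, h⟩ then g j else 1) * (if (j : ℕ) < m then g j else 1) := by
    intro j
    by_cases h1 : (j : ℕ) < m
    · rw [if_pos (by omega), if_pos h1, if_neg (by intro h; rw [h] at h1; simp at h1), one_mul]
    · by_cases h2 : j = ⟨m, h⟩
      · subst h2; simp
      · have : (j : ℕ) ≠ m := fun h3 => h2 (Fin.ext h3)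
        rw [if_neg (by omega), if_neg h1, if_neg h2, one_mul]
  rw [Finset.prod_congr rfl (fun j _ => this j), Finset.prod_mul_distrib]
  simp

theorem pmono_diag [Field F] (n N : ℕ) (β u : F) (t : Fin N → F) (c : Fin n)
    (s s' : Fin N → Fin n) (m : ℕ) : ∀ (_ : m ≤ N),
    (∀ j : Fin N, (j : ℕ) < m → s j < c) → pmono n N β u t m (c, s) (c, s') =
      wt N β u t m * (if s' = s then 1 else 0) := by
  induction m with
  | zero =>
    intro _ _
    simp [pmono, wt, Matrix.one_apply, eq_comm]
  | succ m ih =>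
    intro hm hs
    have hm' : m < N := by omega
    have hc := hs ⟨m, hm'⟩ (Nat.lt_succ_self m)
    rw [pmono_succ_apply n N β u t m hm', pmono_zero_of_lt n N β u t c s' m (by omega) _ _ hc ?_,
      ih (by omega) (fun j hj => hs j (by omega)), if_pos hc, if_pos hc, wt, wt,
      prod_lt_succ N _ m hm']
    · ring
    · intro j hj
      rw [Function.update_of_ne (by intro h; rw [h] at hj; simp at hj)]
      exact hs j (by omega)

theorem pmono_zero_row [Field F] (n N : ℕ) (β u : F) (t : Fin N → F) (z c : Fin n)
    (hz : (z : ℕ) = 0) (s s' : Fin N → Fin n) (p : Fin N) (hp : s p = c)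
    (hlt : ∀ j, j < p → s j < c) (hgt : ∀ j, p < j → s j = z) (m : ℕ) : ∀ (_ : m ≤ N),
    (p : ℕ) < m → pmono n N β u t m (z, s) (c, s') =
      wt N β u t p * (if s' = Function.update s p z then 1 else 0) := by
  induction m with
  | zero => intro _ h; omega
  | succ m ih =>
    intro hm hpm
    have hm' : m < N := by omega
    have hnl : ¬ (s ⟨m, hm'⟩ < z) := by rw [Fin.lt_def]; omega
    rw [pmono_succ_apply n N β u t m hm', if_neg hnl, if_neg hnl, one_mul, add_zero]
    by_cases h : (p : ℕ) = m
    · have hpe : (⟨m, hm'⟩ : Fin N) = p := Fin.ext h.symm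
      rw [hpe, hp, pmono_diag n N β u t c _ _ m (by omega), h]
      intro j hj
      rw [Function.update_of_ne (by intro h; rw [h] at hj; omega)]
      exact hlt j (by rw [Fin.lt_def]; omega)
    · have h2 : s ⟨m, hm'⟩ = z := hgt _ (by rw [Fin.lt_def]; simp; omega)
      have h3 : Function.update s ⟨m, hm'⟩ z = s := by
        conv_lhs => rw [← h2]
        simp
      rw [h2, h3, ih (by omega) (by omega)]

theorem ket_vecMul [Field F] (n N : ℕ) (g : Fin N → Fin n)
    (A : Matrix (Fin N → Fin n) (Fin N → Fin n) F) :
    Matrix.vecMul (ket n N g) A = A g := by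
  funext s
  simp [Matrix.vecMul, dotProduct, ket]

theorem ket_block [Field F] (n N : ℕ) (β u : F) (t : Fin N → F) (z c : Fin n)
    (hz : (z : ℕ) = 0) (s : Fin N → Fin n) (p : Fin N) (hp : s p = c)
    (hlt : ∀ j, j < p → s j < c) (hgt : ∀ j, p < j → s j = z) :
    Matrix.vecMul (ket n N s) (blockOp n N β u t z c) =
      wt N β u t p • ket n N (Function.update s p z) := by
  rw [ket_vecMul]
  funext s'
  rw [blockOp, Matrix.of_apply, tmono_eq,
    pmono_zero_row n N β u t z c hz s s' p hp hlt hgt N le_rfl p.isLt]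
  rfl

/-- cycles -/
def cyc (M a : ℕ) : ℕ → Equiv.Perm (Fin (M + 2))
  | 0 => 1
  | m + 1 => cyc M a m * (if h : a + m < M + 1 then
      Equiv.swap (⟨a + m, h⟩ : Fin (M + 1)).castSucc (⟨a + m, h⟩ : Fin (M + 1)).succ else 1)

theorem swap_val (M b : ℕ) (h : b < M + 1) (j : Fin (M + 2)) :
    ((Equiv.swap (⟨b, h⟩ : Fin (M + 1)).castSucc (⟨b, h⟩ : Fin (M + 1)).succ j : Fin (M + 2)) : ℕ)
      = if (j : ℕ) = b then b + 1 else if (j : ℕ) = b + 1 then b else j := by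
  rw [Equiv.swap_apply_def]
  simp only [Fin.ext_iff, Fin.val_castSucc, Fin.val_succ]
  split_ifs <;> simp

theorem cyc_val (M a m : ℕ) : ∀ (_ : a + m ≤ M + 1) (j : Fin (M + 2)),
    (cyc M a m j : ℕ) = if (j : ℕ) < a then (j : ℕ) else if (j : ℕ) < a + m then j + 1
      else if (j : ℕ) = a + m then a else j := by
  induction m with
  | zero =>
    intro _ j
    simp only [cyc, Equiv.Perm.one_apply]
    split_ifs <;> omega
  | succ m ih =>
    intro h j
    rw [cyc, dif_pos (show a + m < M + 1 by omega), Equiv.Perm.mul_apply, ih (by omega), swap_val]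
    split_ifs <;> omega

theorem rho_eq_cyc (M k : ℕ) (hk : k ≤ M + 1) : rhoPerm M k hk = cyc M 0 k := by
  induction k with
  | zero => simp [rhoPerm, cyc]
  | succ k ih =>
    rw [cyc, dif_pos (show 0 + k < M + 1 by omega), ← ih (by omega), rhoPerm,
      List.ofFn_succ', List.concat_eq_append, List.prod_append, List.prod_singleton]
    congr 1
    congr 1 <;> ext <;> simp

theorem rho_val (M k : ℕ) (hk : k ≤ M + 1) (j : Fin (M + 2)) :
    (rhoPerm M k hk j : ℕ) = if (j : ℕ) < k then (j : ℕ) + 1 else if (j : ℕ) = k then 0 else j := by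
  rw [rho_eq_cyc, cyc_val M 0 k (by omega)]
  simp

theorem omega_val (N : ℕ) (j : Fin N) : (omegaPerm N j : ℕ) = N - (j + 1) := by
  change (Fin.rev j : ℕ) = _
  simp

theorem rho_inv_omega (M k : ℕ) (hk : k ≤ M + 1) :
    (rhoPerm M k hk)⁻¹ * omegaPerm (M + 2) = omegaPerm (M + 2) * cyc M (M + 1 - k) k := by
  rw [inv_mul_eq_iff_eq_mul]
  ext j
  rw [Equiv.Perm.mul_apply, Equiv.Perm.mul_apply, rho_val, omega_val, omega_val,
    cyc_val _ _ _ (by omega)]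
  have := j.isLt
  split_ifs <;> omega

theorem permLength_step (M : ℕ) (w : Equiv.Perm (Fin (M + 2))) (i : Fin (M + 1))
    (h : w i.succ < w i.castSucc) :
    permLength (w * Equiv.swap i.castSucc i.succ) + 1 = permLength w := by
  classical
  set s := Equiv.swap i.castSucc i.succ with hs
  have hmem : (i.castSucc, i.succ) ∈ (Finset.univ.filter fun p : Fin (M + 2) × Fin (M + 2) =>
      p.1 < p.2 ∧ w p.2 < w p.1) := by
    simp only [Finset.mem_filter, Finset.mem_univ, true_and]
    exact ⟨Fin.castSucc_lt_succ, h⟩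
  have hss : ∀ j, s (s j) = j := fun j => by simp [hs]
  have key : (Finset.univ.filter fun p : Fin (M + 2) × Fin (M + 2) =>
      p.1 < p.2 ∧ (w * s) p.2 < (w * s) p.1) =
      ((Finset.univ.filter fun p : Fin (M + 2) × Fin (M + 2) =>
      p.1 < p.2 ∧ w p.2 < w p.1).erase (i.castSucc, i.succ)).map
        (Equiv.prodCongr s s).toEmbedding := by
    ext ⟨a, b⟩
    rw [Finset.mem_map_equiv]
    have e : (Equiv.prodCongr s s).symm (a, b) = (s a, s b) := by
      simp [hs]
    rw [e, Finset.mem_filter, Finset.mem_erase, Finset.mem_filter]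
    simp only [Finset.mem_univ, true_and,
      Equiv.Perm.mul_apply, ne_eq, Prod.mk.injEq]
    have ha : (s a : ℕ) = if (a : ℕ) = i then (i : ℕ) + 1 else if (a : ℕ) = i + 1 then (i : ℕ)
      else a := swap_val M i i.isLt a
    have hb : (s b : ℕ) = if (b : ℕ) = i then (i : ℕ) + 1 else if (b : ℕ) = i + 1 then (i : ℕ)
      else b := swap_val M i i.isLt b
    have hneg : w (s b) < w (s a) → ¬ (s b = i.castSucc ∧ s a = i.succ) := by
      rintro h1 ⟨h2, h3⟩
      rw [h2, h3] at h1
      exact lt_asymm h1 h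
    have : w (s b) < w (s a) →
        (a < b ↔ (¬ (s a = i.castSucc ∧ s b = i.succ) ∧ s a < s b)) := by
      intro h1
      have h2 := hneg h1
      simp only [Fin.ext_iff, Fin.lt_def, Fin.val_castSucc, Fin.val_succ] at h2 ⊢
      split_ifs at ha hb <;> omega
    constructor
    · rintro ⟨h1, h2⟩
      exact ⟨((this h2).1 h1).1, ((this h2).1 h1).2, h2⟩
    · rintro ⟨h1, h2, h3⟩
      exact ⟨(this h3).2 ⟨h1, h2⟩, h3⟩
  unfold permLength
  rw [key, Finset.card_map, Finset.card_erase_add_one hmem]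

/-- row product -/
def qf [Field F] (M : ℕ) (β : F) (y : Fin (M + 2) → F) (l : ℕ) (u : F) : F :=
  ∏ j : Fin (M + 2), if (j : ℕ) < l then (u + y j + β * u * y j) else 1

/-- row lengths -/
def len (M a m i : ℕ) : ℕ := if a ≤ i ∧ i < a + m then M - i else M + 1 - i

theorem groth_val [Field F] (M : ℕ) (β : F)
    (G : Equiv.Perm (Fin (M + 2)) → (Fin (M + 2) → F) → (Fin (M + 2) → F) → F)
    (hG : IsGroth (M + 1) β G) (y : Fin (M + 2) → F) (a m : ℕ) : ∀ (_ : a + m ≤ M + 1)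
    (x : Fin (M + 2) → F) (_ : Function.Injective x),
    G (omegaPerm (M + 2) * cyc M a m) x y = ∏ i : Fin (M + 2), qf M β y (len M a m i) (x i) := by
  induction m with
  | zero =>
    intro _ x _
    rw [cyc, mul_one, hG.1, Finset.prod_filter, ← Finset.univ_product_univ, Finset.prod_product]
    refine Finset.prod_congr rfl fun i _ => ?_
    rw [qf]
    refine Finset.prod_congr rfl fun j _ => ?_
    have : ((i : ℕ) + (j : ℕ) + 2 ≤ M + 1 + 1) ↔ (j : ℕ) < len M a 0 i := by
      unfold len
      split_ifs <;> omega
    simp only [this]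
  | succ m ih =>
    intro hm x hx
    have hb : a + m < M + 1 := by omega
    set i : Fin (M + 1) := ⟨a + m, hb⟩ with hi
    rw [cyc, dif_pos hb, ← mul_assoc]
    have hne : i.castSucc ≠ i.succ := by
      intro h
      have := congrArg Fin.val h
      simp at this
    have hxne : x i.castSucc ≠ x i.succ := fun h => hne (hx h)
    rw [hG.2 _ i x y ?_ hxne, ih (by omega) x hx,
      ih (by omega) (fun j => x (Equiv.swap i.castSucc i.succ j))
        (hx.comp (Equiv.injective _))]
    · have split : ∀ g : Fin (M + 2) → F, ∏ j, g j = g i.castSucc * (g i.succ *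
          ∏ j ∈ (Finset.univ.erase i.castSucc).erase i.succ, g j) := by
        intro g
        rw [Finset.mul_prod_erase _ _ (by simp [hne.symm]), Finset.mul_prod_erase _ _ (by simp)]
      rw [split, split, split]
      have r1 : ∏ j ∈ (Finset.univ.erase i.castSucc).erase i.succ,
          qf M β y (len M a m j) (x (Equiv.swap i.castSucc i.succ j)) =
          ∏ j ∈ (Finset.univ.erase i.castSucc).erase i.succ, qf M β y (len M a m j) (x j) := by
        refine Finset.prod_congr rfl fun j hj => ?_
        simp only [Finset.mem_erase, Finset.mem_univ, and_true] at hj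
        rw [Equiv.swap_apply_of_ne_of_ne hj.2 hj.1]
      have r2 : ∏ j ∈ (Finset.univ.erase i.castSucc).erase i.succ,
          qf M β y (len M a (m + 1) j) (x j) =
          ∏ j ∈ (Finset.univ.erase i.castSucc).erase i.succ, qf M β y (len M a m j) (x j) := by
        refine Finset.prod_congr rfl fun j hj => ?_
        simp only [Finset.mem_erase, Finset.mem_univ, and_true] at hj
        have h1 : (j : ℕ) ≠ a + m := fun h => hj.2 (Fin.ext h)
        have : len M a (m + 1) j = len M a m j := by
          unfold len
          split_ifs <;> omega
        rw [this]
      rw [r1, r2, Equiv.swap_apply_left, Equiv.swap_apply_right]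
      have l1 : len M a m i.castSucc = (M - (a + m)) + 1 := by
        simp only [len, Fin.val_castSucc, hi]
        split_ifs <;> omega
      have l2 : len M a m i.succ = M - (a + m) := by
        simp only [len, Fin.val_succ, hi]
        split_ifs <;> omega
      have l3 : len M a (m + 1) i.castSucc = M - (a + m) := by
        simp only [len, Fin.val_castSucc, hi]
        split_ifs <;> omega
      have l4 : len M a (m + 1) i.succ = M - (a + m) := by
        simp only [len, Fin.val_succ, hi]
        split_ifs <;> omega
      rw [l1, l2, l3, l4]
      have hq : ∀ u, qf M β y (M - (a + m) + 1) u =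
          (u + y ⟨M - (a + m), by omega⟩ + β * u * y ⟨M - (a + m), by omega⟩) *
            qf M β y (M - (a + m)) u :=
        fun u => prod_lt_succ (M + 2) (fun j => u + y j + β * u * y j) _ (by omega)
      rw [hq, hq, div_eq_iff (sub_ne_zero.mpr hxne)]
      ring
    · apply permLength_step
      rw [Fin.lt_def, Equiv.Perm.mul_apply, Equiv.Perm.mul_apply, omega_val, omega_val,
        cyc_val _ _ _ (by omega), cyc_val _ _ _ (by omega)]
      simp only [Fin.val_castSucc, Fin.val_succ, hi]
      split_ifs <;> omega

/-- states along the way -/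
def stt (M k : ℕ) (hk : k ≤ M + 1) (m : ℕ) : Fin (M + 2) → Fin (M + 2) := fun j =>
  if (rhoPerm M k hk j : ℕ) ≤ M + 1 - m then rhoPerm M k hk j else 0

theorem desc_partial [Field F] (M k : ℕ) (hk : k ≤ M + 1) (β : F)
    (σ : Fin (M + 1) → F) (t : Fin (M + 2) → F) (m : ℕ) : ∀ (hm : m ≤ M + 1),
    Matrix.vecMul (ket (M + 2) (M + 2) fun j => rhoPerm M k hk j)
      (List.ofFn fun a : Fin m => blockOp (M + 2) (M + 2) β (σ (Fin.castLE hm a)) t 0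
        (Fin.rev (Fin.castLE hm a)).succ).prod =
      (∏ a : Fin m, wt (M + 2) β (σ (Fin.castLE hm a)) t (len M (M + 1 - k) k a)) •
        ket (M + 2) (M + 2) (stt M k hk m) := by
  induction m with
  | zero =>
    intro _
    have : stt M k hk 0 = fun j => rhoPerm M k hk j := by
      funext j
      unfold stt
      rw [if_pos (by omega)]
    simp [this]
  | succ m ih =>
    intro hm
    rw [List.ofFn_succ', List.concat_eq_append, List.prod_append, List.prod_singleton,
      ← Matrix.vecMul_vecMul, Fin.prod_univ_castSucc]
    have := ih (by omega)
    simp only [Fin.castLE_castSucc, Fin.val_castSucc] at this ⊢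
    rw [this, Matrix.smul_vecMul, mul_smul]
    congr 1
    have hlen : len M (M + 1 - k) k m < M + 2 := by
      unfold len
      split_ifs <;> omega
    have hrev : ((Fin.rev (Fin.castLE hm (Fin.last m))).succ : ℕ) = M + 1 - m := by
      simp; omega
    have hst : ∀ j, (stt M k hk m j : ℕ) = if (rhoPerm M k hk j : ℕ) ≤ M + 1 - m then
        (rhoPerm M k hk j : ℕ) else 0 := by
      intro j
      unfold stt
      split_ifs <;> simp
    rw [ket_block (M + 2) (M + 2) β _ t 0 _ rfl (stt M k hk m) ⟨len M (M + 1 - k) k m, hlen⟩]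
    · congr 2
      funext j
      by_cases hj : j = ⟨len M (M + 1 - k) k m, hlen⟩
      · rw [hj, Function.update_self]
        unfold stt
        rw [if_neg]
        rw [rho_val]
        unfold len
        simp only
        split_ifs <;> omega
      · rw [Function.update_of_ne hj]
        have hj' : (j : ℕ) ≠ len M (M + 1 - k) k m := fun h => hj (Fin.ext h)
        have hr := rho_val M k hk j
        unfold stt
        unfold len at hj'
        have : (rhoPerm M k hk j : ℕ) ≠ M + 1 - m := by
          split_ifs at hj' hr <;> omega
        split_ifs <;> first | rfl | omega
    · apply Fin.ext
      rw [hrev, hst, rho_val]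
      unfold len
      simp only
      split_ifs <;> omega
    · intro j hj
      rw [Fin.lt_def] at hj ⊢
      rw [hrev, hst, rho_val]
      unfold len at hj
      simp only at hj
      split_ifs at hj ⊢ <;> omega
    · intro j hj
      apply Fin.ext
      rw [Fin.lt_def] at hj
      have := j.isLt
      rw [hst, rho_val]
      unfold len at hj
      simp only at hj
      split_ifs at hj ⊢ <;> first | rfl | omega

theorem om_eq [Field F] (β u τ : F) (h : 1 + β * τ ≠ 0) :
    om β u τ = u + negOm β τ + β * u * negOm β τ := by
  unfold om negOm
  rw [div_eq_iff h, add_mul, add_mul, div_mul_cancel₀ _ h, mul_assoc (β * u), div_mul_cancel₀ _ h]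
  ring

end helpers

/-- **Lemma `l2`**: for `0 ≤ k ≤ N-1` (`n = N = M+2`),
`⟨1,2,…,k,0,k+1,…,N-1| B_{N-1}(σ_1) ⋯ B_1(σ_{N-1})
  = G^β_{ρ_k⁻¹ ω_N}(σ; ⊖t) ⟨Ω|`. -/
theorem bra_rho_action [Field F] [CharZero F] (M k : ℕ) (hk : k ≤ M + 1) (β : F)
    (σ : Fin (M + 1) → F) (t : Fin (M + 2) → F)
    (hind : AlgebraicIndependent ℚ
      (Sum.elim (fun _ : Unit => β) (Sum.elim σ t)))
    (G : Equiv.Perm (Fin (M + 2)) → (Fin (M + 2) → F) → (Fin (M + 2) → F) → F)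
    (hG : IsGroth (M + 1) β G) :
    Matrix.vecMul (ket (M + 2) (M + 2) fun j => rhoPerm M k hk j) (descB M β t σ) =
      G ((rhoPerm M k hk)⁻¹ * omegaPerm (M + 2)) (Fin.snoc σ 0)
          (Fin.snoc (fun i : Fin (M + 1) => negOm β (t i.castSucc)) 0) •
        ket (M + 2) (M + 2) (fun _ => 0) := by
  classical
  have hinj := hind.injective
  have hσinj : Function.Injective σ := fun a b h => by
    have := @hinj (Sum.inr (Sum.inl a)) (Sum.inr (Sum.inl b)) (by simpa using h)
    simpa using this
  have hσ0 : ∀ a, σ a ≠ 0 := fun a => by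
    simpa using hind.ne_zero (Sum.inr (Sum.inl a))
  have hx : Function.Injective (Fin.snoc σ 0 : Fin (M + 2) → F) := by
    intro a b
    refine Fin.lastCases ?_ (fun a => ?_) a <;> refine Fin.lastCases ?_ (fun b => ?_) b
    · simp
    · simp only [Fin.snoc_last, Fin.snoc_castSucc]
      exact fun h => absurd h.symm (hσ0 b)
    · simp only [Fin.snoc_last, Fin.snoc_castSucc]
      exact fun h => absurd h (hσ0 a)
    · simp only [Fin.snoc_castSucc]
      exact fun h => by rw [hσinj h]
  have hβt : ∀ j, 1 + β * t j ≠ 0 := by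
    intro j h
    have := (show Function.Injective _ from hind).eq_iff (a := 1 + MvPolynomial.X (Sum.inl ()) * MvPolynomial.X (Sum.inr (Sum.inr j)))
        (b := (0 : MvPolynomial _ ℚ)) |>.1 (by simpa using h)
    have h2 := congrArg (MvPolynomial.eval (fun _ => (0 : ℚ))) this
    simp at h2
  have h1 := desc_partial M k hk β σ t (M + 1) le_rfl
  have h2 : stt M k hk (M + 1) = fun _ => 0 := by
    funext j
    unfold stt
    split_ifs with h
    · apply Fin.ext
      simpa using h
    · rfl
  rw [h2] at h1
  rw [rho_inv_omega, groth_val M β G hG _ _ _ (by omega) _ hx, Fin.prod_univ_castSucc]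
  refine h1.trans ?_
  congr 1
  have hl : len M (M + 1 - k) k (Fin.last (M + 1) : Fin (M + 2)) = 0 := by
    simp only [len, Fin.val_last]
    split_ifs <;> omega
  rw [hl]
  have hq0 : ∀ y u, qf M β y 0 u = 1 := by
    intro y u
    simp [qf]
  rw [hq0, mul_one]
  refine Finset.prod_congr rfl fun i _ => ?_
  rw [Fin.snoc_castSucc]
  unfold wt qf
  refine Finset.prod_congr rfl fun j _ => ?_
  simp only [Fin.val_castSucc]
  split_ifs with hj
  · have hj' : (j : ℕ) < M + 1 := by
      unfold len at hj
      split_ifs at hj <;> omega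
    have : j = (⟨j, hj'⟩ : Fin (M + 1)).castSucc := rfl
    rw [this, Fin.snoc_castSucc, ← om_eq _ _ _ (hβt _)]
    rfl
  · rfl
end
end

section
/- Let 1 ≤ a < b ≤ N and 1 ≤ i ≤ N−1, and let ⟨ψ| = ⟨n_1,…,n_{a−1}, i−1, n_{a+1},…,n_{b−1}, i, n_{b+1},…,n_N| and ⟨s_iψ| = ⟨n_1,…,n_{a−1}, i, n_{a+1},…,n_{b−1}, i−1, n_{b+1},…,n_N| be dual natural basis vectors whose entries at positions a and b are (i−1, i) and (i, i−1) respectively, and whose remaining entries satisfy n_s < i−1 for all s ≠ a, b. Then (⟨s_iψ| + β ⟨ψ|) B_i(x) B_{i−1}(y) = ⟨ψ| B_{i−1}(x) B_i(y). -/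
noncomputable section
open scoped BigOperators

variable {F : Type*}

section Aux
set_option linter.all false
set_option linter.unusedSimpArgs false
variable {n N : ℕ}

/-- swap weight -/
def swW [Field F] (β z : F) (p s : Fin n) : F := if s < p then 1 + β * z else 1

/-- stay weight -/
def stW [Field F] (z : F) (p s : Fin n) : F := if s < p then z else 0

/-- one-row path weight -/
def path1 [Field F] (β u : F) (t : Fin N → F) (c : Fin n) (g s : Fin N → Fin n) :
    List (Fin N) → Fin n → F
  | [], p => if p = c then 1 else 0
  | i :: l, p =>
    (if s i = p then swW β (om β u (t i)) p (g i) * path1 β u t c g s l (g i) else 0) +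
    (if s i = g i then stW (om β u (t i)) p (g i) * path1 β u t c g s l p else 0)

/-- two-row path weight -/
def path2 [Field F] (β x y : F) (t : Fin N → F) (c1 c2 : Fin n) (g s : Fin N → Fin n) :
    List (Fin N) → Fin n → Fin n → F
  | [], p, q => if p = c1 ∧ q = c2 then 1 else 0
  | i :: l, p, q =>
    (if s i = q then swW β (om β x (t i)) p (g i) * swW β (om β y (t i)) q p *
      path2 β x y t c1 c2 g s l (g i) p else 0) +
    (if s i = p then swW β (om β x (t i)) p (g i) * stW (om β y (t i)) q p *
      path2 β x y t c1 c2 g s l (g i) q else 0) +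
    (if s i = q then stW (om β x (t i)) p (g i) * swW β (om β y (t i)) q (g i) *
      path2 β x y t c1 c2 g s l p (g i) else 0) +
    (if s i = g i then stW (om β x (t i)) p (g i) * stW (om β y (t i)) q (g i) *
      path2 β x y t c1 c2 g s l p q else 0)

lemma path1_congr [Field F] (β u : F) (t : Fin N → F) (c : Fin n) (g g' s s' : Fin N → Fin n)
    (l : List (Fin N)) (hg : ∀ j ∈ l, g j = g' j) (hs : ∀ j ∈ l, s j = s' j) (p : Fin n) :
    path1 β u t c g s l p = path1 β u t c g' s' l p := by
  induction l generalizing p with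
  | nil => rfl
  | cons i l ih =>
    simp only [List.mem_cons, forall_eq_or_imp] at hg hs
    simp only [path1, hg.1, hs.1, ih hg.2 hs.2]

lemma Rmat_apply' [Field F] (β u w : F) (p s q m : Fin n) :
    Rmat n β u w (p, s) (q, m) =
      (if q = s ∧ m = p then swW β (om β u w) p s else 0) +
      (if q = p ∧ m = s then stW (om β u w) p s else 0) := by
  simp only [Rmat, Matrix.of_apply, swW, stW]
  congr 1
  · by_cases h : p = m ∧ s = q
    · obtain ⟨rfl, rfl⟩ := h; simp
    · rw [if_neg h, if_neg]; tauto
  · by_cases h : q = p ∧ m = s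
    · obtain ⟨rfl, rfl⟩ := h; simp
    · rw [if_neg h, if_neg]; tauto

lemma Rsite_mul [Field F] (β u w : F) (i : Fin N)
    (A : Matrix (Fin n × (Fin N → Fin n)) (Fin n × (Fin N → Fin n)) F)
    (p : Fin n) (g : Fin N → Fin n) (z : Fin n × (Fin N → Fin n)) :
    (Rsite n N β u w i * A) (p, g) z =
      swW β (om β u w) p (g i) * A (g i, Function.update g i p) z +
      stW (om β u w) p (g i) * A (p, g) z := by
  rw [Matrix.mul_apply]
  have key : ∀ r : Fin n × (Fin N → Fin n), Rsite n N β u w i (p, g) r * A r z =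
      (if r = (g i, Function.update g i p) then swW β (om β u w) p (g i) * A r z else 0) +
      (if r = (p, g) then stW (om β u w) p (g i) * A r z else 0) := by
    rintro ⟨q, h⟩
    simp only [Rsite, Matrix.of_apply, Rmat_apply', Prod.mk.injEq]
    have e1 : h = Function.update g i p ↔ h i = p ∧ ∀ j, j ≠ i → g j = h j := by
      constructor
      · rintro rfl
        refine ⟨by simp, fun j hj => by simp [hj]⟩
      · rintro ⟨h1, h2⟩
        funext j
        by_cases hj : j = i
        · subst hj; simp [h1]
        · simp [hj, h2 j hj]
    have e2 : h = g ↔ h i = g i ∧ ∀ j, j ≠ i → g j = h j := by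
      constructor
      · rintro rfl
        simp
      · rintro ⟨h1, h2⟩
        funext j
        by_cases hj : j = i
        · subst hj; simp [h1]
        · simp [h2 j hj]
    rw [if_congr (and_congr_right' e1) rfl rfl, if_congr (and_congr_right' e2) rfl rfl]
    by_cases h0 : ∀ j, j ≠ i → g j = h j
    · rw [if_pos h0, mul_one, add_mul, ite_mul, ite_mul, zero_mul]
      congr 1
      · exact if_congr (and_congr_right' (by simp only [eq_true h0, and_true])) rfl rfl
      · exact if_congr (and_congr_right' (by simp only [eq_true h0, and_true])) rfl rfl
    · rw [if_neg h0, mul_zero, zero_mul, if_neg (fun k => h0 k.2.2), if_neg (fun k => h0 k.2.2), add_zero]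
  rw [Finset.sum_congr rfl (fun r _ => key r), Finset.sum_add_distrib]
  simp

lemma prod_path1 [Field F] (β u : F) (t : Fin N → F) (c : Fin n) (s : Fin N → Fin n)
    (l : List (Fin N)) (hl : l.Nodup) (g : Fin N → Fin n) (p : Fin n) :
    ((l.map fun i => Rsite n N β u (t i) i).prod) (p, g) (c, s) =
      if ∀ j, j ∉ l → s j = g j then path1 β u t c g s l p else 0 := by
  induction l generalizing g p with
  | nil =>
    simp only [List.map_nil, List.prod_nil, Matrix.one_apply, Prod.mk.injEq, path1]
    simp only [List.not_mem_nil, not_false_eq_true, forall_const, ← funext_iff]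
    by_cases h : p = c <;> by_cases h' : s = g <;> simp [h, h', eq_comm]
  | cons i l ih =>
    rw [List.nodup_cons] at hl
    rw [List.map_cons, List.prod_cons, Rsite_mul, ih hl.2, ih hl.2]
    rw [path1_congr β u t c (Function.update g i p) g s s l
      (fun j hj => by
        have : j ≠ i := by rintro rfl; exact hl.1 hj
        simp [this]) (fun _ _ => rfl)]
    have e1 : (∀ j, j ∉ l → s j = Function.update g i p j) ↔
        (∀ j, j ∉ i :: l → s j = g j) ∧ s i = p := by
      constructor
      · intro h
        refine ⟨fun j hj => ?_, by simpa using h i hl.1⟩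
        simp only [List.mem_cons, not_or] at hj
        simpa [hj.1] using h j hj.2
      · rintro ⟨h1, h2⟩ j hj
        by_cases hji : j = i
        · subst hji; simp [h2]
        · simpa [hji] using h1 j (by simp [hji, hj])
    have e2 : (∀ j, j ∉ l → s j = g j) ↔
        (∀ j, j ∉ i :: l → s j = g j) ∧ s i = g i := by
      constructor
      · intro h
        refine ⟨fun j hj => ?_, by simpa using h i hl.1⟩
        simp only [List.mem_cons, not_or] at hj
        exact h j hj.2
      · rintro ⟨h1, h2⟩ j hj
        by_cases hji : j = i
        · subst hji; simp [h2]
        · simpa [hji] using h1 j (by simp [hji, hj])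
    rw [if_congr e1 rfl rfl, if_congr e2 rfl rfl]
    by_cases h0 : ∀ j, j ∉ i :: l → s j = g j
    · simp only [eq_true h0, true_and, if_true, path1, mul_ite, mul_zero]
    · simp only [eq_false h0, false_and, if_false, mul_zero, add_zero]

lemma sum_fiber [Field F] (l : List (Fin N)) (i : Fin N) (hi : i ∉ l) (s : Fin N → Fin n)
    (m : Fin n) (f : (Fin N → Fin n) → F)
    (hf : ∀ r r' : Fin N → Fin n, (∀ j ∈ l, r j = r' j) → f r = f r') :
    (∑ r : Fin N → Fin n, if (∀ j, j ∉ i :: l → r j = s j) ∧ r i = m then f r else 0) =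
    ∑ r : Fin N → Fin n, if (∀ j, j ∉ l → r j = s j) then f r else 0 := by
  rw [← Finset.sum_filter, ← Finset.sum_filter]
  refine Finset.sum_nbij' (fun r => Function.update r i (s i)) (fun r => Function.update r i m)
    ?_ ?_ ?_ ?_ ?_
  · intro r hr
    simp only [Finset.mem_filter, Finset.mem_univ, true_and] at hr ⊢
    intro j hj
    by_cases hji : j = i
    · subst hji; simp
    · simpa [hji] using hr.1 j (by simp [hji, hj])
  · intro r hr
    simp only [Finset.mem_filter, Finset.mem_univ, true_and] at hr ⊢
    refine ⟨fun j hj => ?_, by simp⟩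
    simp only [List.mem_cons, not_or] at hj
    simpa [hj.1] using hr j hj.2
  · intro r hr
    simp only [Finset.mem_filter, Finset.mem_univ, true_and] at hr
    simp [← hr.2]
  · intro r hr
    simp only [Finset.mem_filter, Finset.mem_univ, true_and] at hr
    simp [← hr i hi]
  · intro r hr
    apply hf
    intro j hj
    have : j ≠ i := by rintro rfl; exact hi hj
    simp [this]

lemma sum_path1 [Field F] (β x y : F) (t : Fin N → F) (c1 c2 : Fin n) (g s : Fin N → Fin n)
    (l : List (Fin N)) (hl : l.Nodup) (p q : Fin n) :
    (∑ r : Fin N → Fin n, if (∀ j, j ∉ l → r j = s j) then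
      path1 β x t c1 g r l p * path1 β y t c2 r s l q else 0) =
    path2 β x y t c1 c2 g s l p q := by
  induction l generalizing p q with
  | nil =>
    simp only [List.not_mem_nil, not_false_eq_true, forall_const, ← funext_iff]
    simp [path1, path2]; split_ifs <;> simp_all
    
  | cons i l ih =>
    rw [List.nodup_cons] at hl
    have key : ∀ m p q, (∑ r : Fin N → Fin n,
        if (∀ j, j ∉ i :: l → r j = s j) ∧ r i = m then
          path1 β x t c1 g r l p * path1 β y t c2 r s l q else 0) =
        path2 β x y t c1 c2 g s l p q := by
      intro m p q
      rw [sum_fiber l i hl.1 s m, ih hl.2]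
      intro r r' h
      rw [path1_congr β x t c1 g g r r' l (fun _ _ => rfl) h,
        path1_congr β y t c2 r r' s s l h (fun _ _ => rfl)]
    simp only [path2]
    rw [← key p (g i) p, ← key p (g i) q, ← key (g i) p (g i), ← key (g i) p q]
    simp only [Finset.mul_sum, ← Finset.sum_ite_irrel, ← Finset.sum_add_distrib]
    have z : ∀ (P : Prop) [Decidable P] (f : (Fin N → Fin n) → F),
        (if P then ∑ r, f r else 0) = ∑ r, if P then f r else 0 := by
      intro P _ f; split_ifs <;> simp
    simp only [z, ← Finset.sum_add_distrib]
    refine Finset.sum_congr rfl fun r _ => ?_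
    by_cases h0 : ∀ j, j ∉ i :: l → r j = s j
    · simp only [eq_true h0, true_and, if_true, path1]
      by_cases h1 : r i = p
      · by_cases h2 : r i = g i
        · have h3 : p = g i := h1.symm.trans h2
          subst h1
          simp only [if_true, ← h2]
          split_ifs <;> ring
        · subst h1
          simp only [if_true, if_neg h2]
          split_ifs <;> first | ring | (exfalso; simp_all; done) | skip
      · by_cases h2 : r i = g i
        · simp only [if_neg h1, h2, if_true]
          rw [h2] at h1
          simp only [if_neg h1]
          split_ifs <;> ring
        · simp only [if_neg h1, if_neg h2]
          split_ifs <;> ring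
    · simp only [eq_false h0, false_and, if_false, mul_zero, add_zero, ite_self]

lemma Tmono_eq [Field F] (β u : F) (t : Fin N → F) (c p : Fin n) (g s : Fin N → Fin n) :
    Tmono n N β u t (p, g) (c, s) = path1 β u t c g s (List.finRange N).reverse p := by
  unfold Tmono
  rw [List.ofFn_eq_map, ← List.map_reverse, prod_path1 _ _ _ _ _ _ (by simpa using List.nodup_finRange N)]
  simp

lemma row_eq [Field F] (β x y : F) (t : Fin N → F) (z c1 c2 : Fin n) (g s : Fin N → Fin n) :
    Matrix.vecMul (ket n N g) (blockOp n N β x t z c1 * blockOp n N β y t z c2) s =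
    path2 β x y t c1 c2 g s (List.finRange N).reverse z z := by
  rw [← sum_path1 _ _ _ _ _ _ _ _ _ (by simpa using List.nodup_finRange N)]
  simp [Matrix.vecMul, dotProduct, ket, Matrix.mul_apply, blockOp, Tmono_eq]

lemma p2_zero1 [Field F] (β x y : F) (t : Fin N → F) (c1 c2 : Fin n) (g s : Fin N → Fin n)
    (l : List (Fin N)) (hl : ∀ j ∈ l, g j ≠ c1) (p q : Fin n) (hp : p ≠ c1) :
    path2 β x y t c1 c2 g s l p q = 0 := by
  induction l generalizing p q with
  | nil => simp [path2, hp]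
  | cons i l ih =>
    simp only [List.mem_cons, forall_eq_or_imp] at hl
    simp [path2, ih hl.2 _ _ hp, ih hl.2 _ _ hl.1]

lemma p2_zero2 [Field F] (β x y : F) (t : Fin N → F) (c1 c2 : Fin n) (g s : Fin N → Fin n)
    (l : List (Fin N)) (hl : ∀ j ∈ l, g j ≠ c1) (hl2 : ∀ j ∈ l, g j ≠ c2) (q : Fin n)
    (hq : q ≠ c2) :
    path2 β x y t c1 c2 g s l c1 q = 0 := by
  induction l generalizing q with
  | nil => simp [path2, hq]
  | cons i l ih =>
    simp only [List.mem_cons, forall_eq_or_imp] at hl hl2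
    simp [path2, ih hl.2 hl2.2 _ hq, ih hl.2 hl2.2 _ hl2.1,
      p2_zero1 β x y t c1 c2 g s l hl.2 _ _ hl.1]

/-- phase 3: sites to the left of `a` -/
lemma p2_tail [Field F] (β x y : F) (t : Fin N → F) (h H : Fin n) (hH : h < H)
    (g g' s : Fin N → Fin n) (l : List (Fin N)) (hl : ∀ j ∈ l, g j < h)
    (hg : ∀ j ∈ l, g' j = g j) :
    path2 β x y t H h g s l H h = path2 β x y t h H g s l h H ∧
    path2 β x y t H h g' s l H h = path2 β x y t h H g s l h H := by
  induction l with
  | nil => simp [path2]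
  | cons i l ih =>
    simp only [List.mem_cons, forall_eq_or_imp] at hl hg
    have hlH : ∀ j ∈ l, g j ≠ H := fun j hj => ((hl.2 j hj).trans hH).ne
    have hlh : ∀ j ∈ l, g j ≠ h := fun j hj => (hl.2 j hj).ne
    have hlH' : ∀ j ∈ l, g' j ≠ H := fun j hj => by rw [hg.2 j hj]; exact hlH j hj
    have hlh' : ∀ j ∈ l, g' j ≠ h := fun j hj => by rw [hg.2 j hj]; exact hlh j hj
    have a1 := hl.1.ne
    have a2 := (hl.1.trans hH).ne
    have a3 := hl.1.trans hH
    have i1 := (ih hl.2 hg.2).1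
    have i2 := (ih hl.2 hg.2).2
    simp [path2, hg.1, p2_zero1 β x y t H h g s l hlH _ _ a2, p2_zero1 β x y t H h g' s l hlH' _ _ a2,
      p2_zero1 β x y t h H g s l hlh _ _ a1, p2_zero2 β x y t H h g s l hlH hlh _ a1,
      p2_zero2 β x y t H h g' s l hlH' hlh' _ a1,
      p2_zero2 β x y t h H g s l hlh hlH _ a2, i1, i2, stW, hl.1, a3]

/-- the phase 2 invariant -/
def Inv2 [Field F] (β : F) (h H : Fin n) (f1 f2 f3 : Fin n → Fin n → F) : Prop :=
  (∀ p, p < h → f1 h p + β * f2 H p = f3 H p) ∧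
  (∀ p, p < h → f1 p h + β * f2 p H = f3 p H) ∧
  (∀ p q, p < h → q < h → f1 p q = 0 ∧ f2 p q = 0 ∧ f3 p q = 0)

lemma inv2_a [Field F] (β x y : F) (t : Fin N → F) (h H : Fin n) (hH : h < H)
    (g g' s : Fin N → Fin n) (l : List (Fin N)) (hl : ∀ j ∈ l, g j < h)
    (hg : ∀ j ∈ l, g' j = g j) (a : Fin N) (ha : g a = h) (ha' : g' a = H) :
    Inv2 β h H (path2 β x y t H h g' s (a :: l)) (path2 β x y t H h g s (a :: l))
      (path2 β x y t h H g s (a :: l)) := by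
  have hlH : ∀ j ∈ l, g j ≠ H := fun j hj => ((hl j hj).trans hH).ne
  have hlh : ∀ j ∈ l, g j ≠ h := fun j hj => (hl j hj).ne
  have hlH' : ∀ j ∈ l, g' j ≠ H := fun j hj => by rw [hg j hj]; exact hlH j hj
  have hlh' : ∀ j ∈ l, g' j ≠ h := fun j hj => by rw [hg j hj]; exact hlh j hj
  have A1 := p2_zero1 β x y t H h g s l hlH
  have A2 := p2_zero1 β x y t H h g' s l hlH'
  have A3 := p2_zero1 β x y t h H g s l hlh
  have B1 := p2_zero2 β x y t H h g s l hlH hlh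
  have B2 := p2_zero2 β x y t H h g' s l hlH' hlh'
  have B3 := p2_zero2 β x y t h H g s l hlh hlH
  obtain ⟨T1, T2⟩ := p2_tail β x y t h H hH g g' s l hl hg
  refine ⟨fun p hp => ?_, fun p hp => ?_, fun p q hp hq => ?_⟩
  · have a1 := hp.ne
    have a2 := (hp.trans hH).ne
    have a3 := (hp.trans hH).not_gt
    have a4 := hp.not_gt
    simp only [path2, ha, ha', A1 h _ hH.ne, A2 h _ hH.ne, A3 H _ hH.ne', B2 p a1, B1 p a1, B3 p a2,
      T1, T2, swW, stW, hH, hH.not_gt, a3, a4, lt_irrefl, if_true, if_false]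
    split_ifs <;> ring
  · have a1 := hp.ne
    have a2 := (hp.trans hH).ne
    have a3 := (hp.trans hH).not_gt
    have a4 := hp.not_gt
    have a5 := hp.trans hH
    simp only [path2, ha, ha', A1 h _ hH.ne, A1 p _ a2, A2 p _ a2, A3 p _ a1, B2 p a1, B1 p a1, B3 p a2,
      T1, T2, swW, stW, hH, hp, hH.not_gt, a3, a4, a5, lt_irrefl, if_true, if_false]
    split_ifs <;> ring
  · have a1 := hp.ne
    have a2 := (hp.trans hH).ne
    have b1 := hq.ne
    have b2 := (hq.trans hH).ne
    refine ⟨?_, ?_, ?_⟩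
    · simp [path2, ha', A2 p _ a2, B2 p a1, B2 q b1]
    · simp [path2, ha, A1 p _ a2, A1 h _ hH.ne]
    · simp [path2, ha, A3 p _ a1, B3 p a2, B3 q b2]

lemma inv2_step [Field F] (β x y : F) (t : Fin N → F) (h H : Fin n) (hH : h < H)
    (g g' s : Fin N → Fin n) (l0 l : List (Fin N)) (hl : ∀ j ∈ l, g j < h)
    (hg : ∀ j ∈ l, g' j = g j)
    (h0 : Inv2 β h H (path2 β x y t H h g' s l0) (path2 β x y t H h g s l0)
      (path2 β x y t h H g s l0)) :
    Inv2 β h H (path2 β x y t H h g' s (l ++ l0)) (path2 β x y t H h g s (l ++ l0))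
      (path2 β x y t h H g s (l ++ l0)) := by
  induction l with
  | nil => exact h0
  | cons i l ih =>
    simp only [List.mem_cons, forall_eq_or_imp] at hl hg
    obtain ⟨I1, I2, I3⟩ := ih hl.2 hg.2
    obtain ⟨hi, -⟩ := hl
    obtain ⟨hgi, -⟩ := hg
    have s1 := hi.trans hH
    refine ⟨fun p hp => ?_, fun p hp => ?_, fun p q hp hq => ?_⟩
    · have a3 := (hp.trans hH).not_gt
      have a4 := hp.not_gt
      simp only [List.cons_append, path2, hgi, ← I1 p hp, ← I1 _ hi, ← I2 _ hi, (I3 _ _ hi hp).1,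
        (I3 _ _ hi hp).2.1, (I3 _ _ hi hp).2.2, swW, stW, a3, a4, s1, hi, if_true, if_false]
      split_ifs <;> ring
    · have a3 := (hp.trans hH)
      simp only [List.cons_append, path2, hgi, ← I2 p hp, ← I1 _ hi, ← I2 _ hi, (I3 _ _ hi hp).1,
        (I3 _ _ hi hp).2.1, (I3 _ _ hi hp).2.2, (I3 _ _ hp hi).1,
        (I3 _ _ hp hi).2.1, (I3 _ _ hp hi).2.2, swW, stW, a3, hp, s1, hi, if_true, if_false]
      split_ifs <;> ring
    · simp [path2, hgi, I3 _ _ hi hp, I3 _ _ hi hq, I3 _ _ hp hi, I3 _ _ hp hq]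

lemma inv1_b [Field F] (β x y : F) (t : Fin N → F) (h H : Fin n) (hH : h < H)
    (g g' s : Fin N → Fin n) (l0 : List (Fin N)) (b : Fin N) (hb : g b = H) (hb' : g' b = h)
    (h0 : Inv2 β h H (path2 β x y t H h g' s l0) (path2 β x y t H h g s l0)
      (path2 β x y t h H g s l0)) (p q : Fin n) (hp : p < h) (hq : q < h) :
    path2 β x y t H h g' s (b :: l0) p q + β * path2 β x y t H h g s (b :: l0) p q =
      path2 β x y t h H g s (b :: l0) p q := by
  have a3 := (hp.trans hH).not_gt
  have a4 := hp.not_gt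
  have b3 := (hq.trans hH).not_gt
  have b4 := hq.not_gt
  simp only [path2, hb, hb', ← h0.1 p hp, ← h0.1 q hq, swW, stW, a3, a4, b3, b4, if_false]
  split_ifs <;> ring

lemma inv1_step [Field F] (β x y : F) (t : Fin N → F) (h H : Fin n)
    (g g' s : Fin N → Fin n) (l0 l : List (Fin N)) (hl : ∀ j ∈ l, g j < h)
    (hg : ∀ j ∈ l, g' j = g j)
    (h0 : ∀ p q : Fin n, p < h → q < h →
      path2 β x y t H h g' s l0 p q + β * path2 β x y t H h g s l0 p q =
      path2 β x y t h H g s l0 p q) (p q : Fin n) (hp : p < h) (hq : q < h) :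
    path2 β x y t H h g' s (l ++ l0) p q + β * path2 β x y t H h g s (l ++ l0) p q =
      path2 β x y t h H g s (l ++ l0) p q := by
  induction l generalizing p q with
  | nil => exact h0 p q hp hq
  | cons i l ih =>
    simp only [List.mem_cons, forall_eq_or_imp] at hl hg
    have ih' := ih hl.2 hg.2
    simp only [List.cons_append, path2, hg.1, ← ih' _ _ hl.1 hp, ← ih' _ _ hl.1 hq,
      ← ih' _ _ hp hl.1, ← ih' _ _ hp hq]
    split_ifs <;> ring

lemma split_list (a b : Fin N) (hab : a < b) : ∃ l1 l2 l3 : List (Fin N),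
    (List.finRange N).reverse = l1 ++ b :: (l2 ++ a :: l3) ∧
    (∀ j, (j ∈ l1 ∨ j ∈ l2 ∨ j ∈ l3) → j ≠ a ∧ j ≠ b) := by
  have hs : (List.finRange N).reverse.Pairwise (fun i j => j < i) := by
    rw [List.pairwise_reverse]
    exact List.pairwise_lt_finRange N
  obtain ⟨l1, l', h1⟩ := List.append_of_mem (show b ∈ (List.finRange N).reverse by simp)
  have ha : a ∈ (List.finRange N).reverse := by simp
  rw [h1] at hs ha
  rw [List.pairwise_append] at hs
  have ha' : a ∈ l' := by
    simp only [List.mem_append, List.mem_cons] at ha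
    rcases ha with ha | ha | ha
    · exact absurd (hs.2.2 a ha b (by simp)) hab.not_gt
    · exact absurd ha hab.ne
    · exact ha
  obtain ⟨l2, l3, h2⟩ := List.append_of_mem ha'
  refine ⟨l1, l2, l3, by rw [h1, h2], ?_⟩
  have hn : (l1 ++ b :: (l2 ++ a :: l3)).Nodup := by
    rw [← h2, ← h1]; simpa using List.nodup_finRange N
  simp only [List.nodup_append, List.nodup_cons, List.mem_append, List.mem_cons] at hn
  rintro j hj
  constructor <;> rintro rfl <;> grind

end Aux

/-- **Lemma `l3pre`**: with `n = N = M+2`, `1 ≤ i ≤ N-1` (`i = ii+1`), let `⟨ψ|`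
have entry `i-1` at position `a`, entry `i` at position `b > a`, and all other
entries `< i-1`, and let `⟨s_iψ|` be obtained by exchanging those two entries.
Then `(⟨s_iψ| + β ⟨ψ|) B_i(x) B_{i-1}(y) = ⟨ψ| B_{i-1}(x) B_i(y)`
(with `B_0 = A`). -/
theorem exchange_relation [Field F] [CharZero F] (M : ℕ) (β x y : F)
    (t : Fin (M + 2) → F)
    (hind : AlgebraicIndependent ℚ (Sum.elim ![β, x, y] t))
    (a b : Fin (M + 2)) (hab : a < b) (ii : Fin (M + 1))
    (g : Fin (M + 2) → Fin (M + 2))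
    (hga : g a = ii.castSucc) (hgb : g b = ii.succ)
    (hother : ∀ s, s ≠ a → s ≠ b → (g s : ℕ) < (ii : ℕ)) :
    Matrix.vecMul
        (ket (M + 2) (M + 2) (Function.update (Function.update g a ii.succ) b ii.castSucc) +
          β • ket (M + 2) (M + 2) g)
        (blockOp (M + 2) (M + 2) β x t 0 ii.succ *
          blockOp (M + 2) (M + 2) β y t 0 ii.castSucc) =
      Matrix.vecMul (ket (M + 2) (M + 2) g)
        (blockOp (M + 2) (M + 2) β x t 0 ii.castSucc *
          blockOp (M + 2) (M + 2) β y t 0 ii.succ) := by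
  funext s
  set h := ii.castSucc with hh
  set H := ii.succ with hHd
  set g' := Function.update (Function.update g a H) b h with hg'
  have hH : h < H := Fin.castSucc_lt_succ
  rw [Matrix.add_vecMul, Matrix.smul_vecMul, Pi.add_apply, Pi.smul_apply, smul_eq_mul,
    row_eq, row_eq, row_eq]
  obtain ⟨l1, l2, l3, hl, hne⟩ := split_list a b hab
  rw [hl]
  have hlow : ∀ j, (j ∈ l1 ∨ j ∈ l2 ∨ j ∈ l3) → g j < h := by
    intro j hj
    rw [Fin.lt_def]
    exact hother j (hne j hj).1 (hne j hj).2
  have hgg : ∀ j, (j ∈ l1 ∨ j ∈ l2 ∨ j ∈ l3) → g' j = g j := by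
    intro j hj
    simp [hg', (hne j hj).1, (hne j hj).2]
  have ha' : g' a = H := by simp [hg', hab.ne]
  have hb' : g' b = h := by simp [hg']
  by_cases h0 : (0 : Fin (M + 2)) < h
  · apply inv1_step β x y t h H g g' s _ l1 (fun j hj => hlow j (Or.inl hj))
      (fun j hj => hgg j (Or.inl hj)) _ _ _ h0 h0
    apply inv1_b β x y t h H hH g g' s _ b hgb hb'
    apply inv2_step β x y t h H hH g g' s _ l2 (fun j hj => hlow j (Or.inr (Or.inl hj)))
      (fun j hj => hgg j (Or.inr (Or.inl hj)))
    exact inv2_a β x y t h H hH g g' s l3 (fun j hj => hlow j (Or.inr (Or.inr hj)))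
      (fun j hj => hgg j (Or.inr (Or.inr hj))) a hga ha'
  · have hz : h = 0 := by
      by_contra hc
      exact h0 (Fin.pos_iff_ne_zero.mpr hc)
    have nolow : ∀ j, ¬ (j ∈ l1 ∨ j ∈ l2 ∨ j ∈ l3) := by
      intro j hj
      have := hlow j hj
      rw [hz] at this
      exact absurd this (Fin.not_lt_zero _)
    have e1 : l1 = [] := List.eq_nil_iff_forall_not_mem.mpr fun j hj => nolow j (Or.inl hj)
    have e2 : l2 = [] := List.eq_nil_iff_forall_not_mem.mpr fun j hj => nolow j (Or.inr (Or.inl hj))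
    have e3 : l3 = [] := List.eq_nil_iff_forall_not_mem.mpr fun j hj => nolow j (Or.inr (Or.inr hj))
    clear_value h H g'
    subst e1 e2 e3 hz
    have n1 := hH.ne
    have n2 := hH.ne'
    simp only [List.nil_append, path2, hga, hgb, ha', hb', swW, stW, hH, hH.not_gt, lt_irrefl,
      n1, n2, if_true, if_false, and_true, and_false, and_self]
    split_ifs <;> ring
end
end

section
/- Let π ∈ S_N and 1 ≤ i ≤ N−1 with ℓ(s_i π) > ℓ(π). Then (⟨s_iπ| + β ⟨π|) B_{N−1}(σ_1) B_{N−2}(σ_2) ⋯ B_{i+1}(σ_{N−i−1}) B_i(σ_{N−i}) B_{i−1}(σ_{N−i+1}) = ⟨π| B_{N−1}(σ_1) B_{N−2}(σ_2) ⋯ B_{i+1}(σ_{N−i−1}) B_{i−1}(σ_{N−i}) B_i(σ_{N−i+1}), where the products run over consecutive descending indices N−1, N−2, …, i+1 followed by the indicated last two factors. -/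
noncomputable section
open scoped BigOperators

variable {F : Type*}

/-- The product `B_{N-1}(σ_1) B_{N-2}(σ_2) ⋯` of `c` consecutive descending
B-operators (`n = N = M+2`). -/
def topString [Field F] (M : ℕ) (β : F) (t : Fin (M + 2) → F) (σ : Fin (M + 2) → F)
    (c : ℕ) (hc : c ≤ M + 1) :
    Matrix (Fin (M + 2) → Fin (M + 2)) (Fin (M + 2) → Fin (M + 2)) F :=
  (List.ofFn fun a : Fin c =>
      blockOp (M + 2) (M + 2) β (σ ⟨a, by have := a.isLt; omega⟩) t 0
        ⟨M + 1 - (a : ℕ), by omega⟩).prod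

/-! ### Chain words and the local operators -/

/-- Transposed action of `1 + x π_j` (0-Hecke generator) on functions of infinite words. -/
def Rc [Field F] (β x : F) (j : ℕ) (Ψ : (ℕ → ℕ) → F) : (ℕ → ℕ) → F := fun g =>
  Ψ g * (if g j < g (j + 1) then 1 + β * x else 1) +
    if g (j + 1) < g j then x * Ψ (g ∘ Equiv.swap j (j + 1)) else 0

/-- Apply `Rc` at the places `m+j-1, …, m`. -/
def Yc [Field F] (β u : F) (τ : ℕ → F) (m : ℕ) : ℕ → ((ℕ → ℕ) → F) → ((ℕ → ℕ) → F)
  | 0, Ψ => Ψ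
  | j + 1, Ψ => Yc β u τ m j (Rc β (om β u (τ j)) (m + j) Ψ)

/-- Apply `m` rows. -/
def Sc [Field F] (N : ℕ) (β : F) (ς τ : ℕ → F) (Ψ : (ℕ → ℕ) → F) : ℕ → ((ℕ → ℕ) → F)
  | 0 => Ψ
  | m + 1 => Yc β (ς m) τ m N (Sc N β ς τ Ψ m)

theorem Yc_pres [Field F] (β u : F) (τ : ℕ → F) (m : ℕ)
    (P : ((ℕ → ℕ) → F) → ((ℕ → ℕ) → F) → Prop)
    (h : ∀ j x A B, P A B → P (Rc β x j A) (Rc β x j B)) (j : ℕ) :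
    ∀ A B, P A B → P (Yc β u τ m j A) (Yc β u τ m j B) := by
  induction j with
  | zero => intro A B hh; exact hh
  | succ j ih => intro A B hh; exact ih _ _ (h _ _ _ _ hh)

theorem Sc_pres [Field F] (N : ℕ) (β : F) (ς τ : ℕ → F)
    (P : ((ℕ → ℕ) → F) → ((ℕ → ℕ) → F) → Prop)
    (h : ∀ j x A B, P A B → P (Rc β x j A) (Rc β x j B)) (A B : (ℕ → ℕ) → F) (h0 : P A B)
    (m : ℕ) : P (Sc N β ς τ A m) (Sc N β ς τ B m) := by
  induction m with
  | zero => exact h0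
  | succ m ih => exact Yc_pres _ _ _ _ P h _ _ _ ih

/-- Tail vanishing. -/
def TailV [Field F] (K : ℕ) (Ψ : (ℕ → ℕ) → F) : Prop :=
  ∀ f : ℕ → ℕ, ∀ p, K ≤ p → f p ≠ 0 → Ψ f = 0

theorem TailV_Rc [Field F] (β x : F) (K j : ℕ) (hj : j + 1 < K) (Ψ : (ℕ → ℕ) → F)
    (h : TailV K Ψ) : TailV K (Rc β x j Ψ) := by
  intro f p hp hf
  have h1 := h f p hp hf
  have h2 := h (f ∘ Equiv.swap j (j + 1)) p hp (by
    simp only [Function.comp]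
    rwa [Equiv.swap_apply_of_ne_of_ne (by omega) (by omega)])
  simp [Rc, h1, h2]

theorem TailV_Yc [Field F] (β u : F) (τ : ℕ → F) (m K j : ℕ) (hj : m + j < K) :
    ∀ Ψ, TailV K Ψ → TailV K (Yc β u τ m j Ψ) := by
  induction j with
  | zero => intro Ψ h; exact h
  | succ j ih => intro Ψ h; exact ih (by omega) _ (TailV_Rc _ _ _ _ (by omega) _ h)

theorem TailV_Sc [Field F] (N : ℕ) (β : F) (ς τ : ℕ → F) (Ψ : (ℕ → ℕ) → F) (h : TailV N Ψ)
    (m : ℕ) : TailV (m + N) (Sc N β ς τ Ψ m) := by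
  induction m with
  | zero => simpa [Sc] using h
  | succ m ih =>
    apply TailV_Yc _ _ _ _ _ _ (by omega)
    intro f p hp hf
    exact ih f p (by omega) hf

/-- Labelled words with a unique `1`, preceding all `0`s. -/
def GoodW (f : ℕ → ℕ) : Prop := ∃ p, (∀ k, f k = 1 ↔ k = p) ∧ ∀ k, k < p → f k ≠ 0

/-- Relation between unlabelled and labelled functions. -/
def LabRel [Field F] (A B : (ℕ → ℕ) → F) : Prop :=
  (∀ f : ℕ → ℕ, GoodW f → A (fun k => f k - 1) = B f) ∧
  (∀ f : ℕ → ℕ, ∀ p q, p < q → f p = 0 → f q = 1 → B f = 0) ∧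
  (∀ f : ℕ → ℕ, ∀ p q, p ≠ q → f p = f q → f p ≠ 0 → B f = 0)

theorem swap_lt_swap {j p q : ℕ} (hpq : p < q) (h : ¬ (p = j ∧ q = j + 1)) :
    Equiv.swap j (j + 1) p < Equiv.swap j (j + 1) q := by
  simp only [Equiv.swap_apply_def]
  split_ifs <;> omega

theorem LabRel_Rc [Field F] (β : F) (j : ℕ) (x : F) (A B : (ℕ → ℕ) → F) (h : LabRel A B) :
    LabRel (Rc β x j A) (Rc β x j B) := by
  obtain ⟨h1, h2, h3⟩ := h
  refine ⟨?_, ?_, ?_⟩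
  · intro f hf
    have e1 := h1 f hf
    have e2 : (if f (j+1) - 1 < f j - 1 then
        x * A ((fun k => f k - 1) ∘ Equiv.swap j (j + 1)) else 0) =
        (if f (j+1) < f j then x * B (f ∘ Equiv.swap j (j + 1)) else 0) := by
      by_cases c : f (j+1) < f j
      · by_cases c2 : f j = 1
        · have c3 : f (j+1) = 0 := by omega
          have := h2 (f ∘ Equiv.swap j (j + 1)) j (j+1) (by omega) (by simp [c3]) (by simp [c2])
          simp [this, c2]
        · rw [if_pos c, if_pos (by omega)]
          obtain ⟨p, hp1, hp2⟩ := hf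
          have := h1 (f ∘ Equiv.swap j (j + 1)) ⟨Equiv.swap j (j + 1) p, by
            intro k; simp only [Function.comp, hp1]; rw [Equiv.swap_apply_eq_iff], by
            intro k hk
            have hjp : j ≠ p := fun hh => c2 ((hp1 j).2 hh)
            have := swap_lt_swap (j := j) hk (by
              rintro ⟨rfl, h2⟩
              rw [Equiv.swap_apply_eq_iff] at h2
              simp at h2; omega)
            rw [Equiv.swap_apply_self] at this
            exact hp2 _ this⟩
          rw [← this]; rfl
      · rw [if_neg c, if_neg (by omega)]
    have e3 : (f j - 1 < f (j+1) - 1) ↔ f j < f (j+1) := by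
      have : f j = 0 → f (j+1) ≠ 1 := by
        obtain ⟨p, hp1, hp2⟩ := hf
        intro h0 h1
        exact hp2 j (by have := (hp1 (j+1)).1 h1; omega) h0
      constructor
      · omega
      · intro hh
        by_contra hc
        exact this (by omega) (by omega)
    simp only [Rc, e1, e2, e3]
  · intro f p q hpq hp hq
    have a1 := h2 f p q hpq hp hq
    simp only [Rc, a1, zero_mul, zero_add]
    split_ifs with c
    · rw [h2 (f ∘ Equiv.swap j (j+1)) (Equiv.swap j (j+1) p) (Equiv.swap j (j+1) q)
        (swap_lt_swap hpq (by rintro ⟨rfl, rfl⟩; omega)) (by simpa using hp) (by simpa using hq)]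
      simp
    · rfl
  · intro f p q hpq hp hq
    have a1 := h3 f p q hpq hp hq
    have a2 := h3 (f ∘ Equiv.swap j (j+1)) (Equiv.swap j (j+1) p) (Equiv.swap j (j+1) q)
      (by simpa using hpq) (by simpa using hp) (by simpa using hq)
    simp [Rc, a1, a2]

/-- The left 0-Hecke operator, as a relation. -/
def HeckeRel [Field F] (β : F) (a : ℕ) (A B : (ℕ → ℕ) → F) : Prop :=
  ∀ g : ℕ → ℕ, ∀ p q, (∀ k, g k = a ↔ k = p) → (∀ k, g k = a + 1 ↔ k = q) →
    (p < q → B g = β * A g) ∧ (q < p → B g = A (Equiv.swap a (a + 1) ∘ g))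

theorem HeckeRel_Rc [Field F] (β : F) (a : ℕ) (j : ℕ) (x : F) (A B : (ℕ → ℕ) → F)
    (h : HeckeRel β a A B) : HeckeRel β a (Rc β x j A) (Rc β x j B) := by
  intro g p q hp hq
  have e0 := h g p q hp hq
  have e1 := h (g ∘ Equiv.swap j (j+1)) (Equiv.swap j (j+1) p) (Equiv.swap j (j+1) q)
    (by intro k; simp only [Function.comp, hp]; rw [Equiv.swap_apply_eq_iff])
    (by intro k; simp only [Function.comp, hq]; rw [Equiv.swap_apply_eq_iff])
  have gp := (hp p).2 rfl
  have gq := (hq q).2 rfl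
  constructor
  · intro hpq
    by_cases c : p = j ∧ q = j + 1
    · obtain ⟨rfl, rfl⟩ := c
      simp only [Rc, gp, gq, e0.1 hpq]
      simp; ring
    · simp only [Rc, e0.1 hpq, e1.1 (swap_lt_swap hpq c)]
      split_ifs <;> ring
  · intro hpq
    by_cases c : q = j ∧ p = j + 1
    · obtain ⟨rfl, rfl⟩ := c
      have : Equiv.swap a (a+1) ∘ g = g ∘ Equiv.swap q (q+1) := by
        funext k
        simp only [Function.comp]
        by_cases k1 : k = q
        · subst k1; simp [gp, gq]
        · by_cases k2 : k = q + 1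
          · subst k2; simp [gp, gq]
          · rw [Equiv.swap_apply_of_ne_of_ne k1 k2, Equiv.swap_apply_of_ne_of_ne]
            · rw [Ne, hp]; exact k2
            · rw [Ne, hq]; exact k1
      have e2 := e1.1 (by simp)
      simp only [Rc, gp, gq, e0.2 hpq, e2, this]
      simp [gp, gq]; ring
    · have e2 := e1.2 (swap_lt_swap hpq c)
      have hlt : ∀ k l, ¬ (k = q ∧ l = p) → ¬ (k = p ∧ l = q) →
          (Equiv.swap a (a+1) (g k) < Equiv.swap a (a+1) (g l) ↔ g k < g l) := by
        intro k l hkl hkl'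
        have k1 := hp k
        have k2 := hq k
        have l1 := hp l
        have l2 := hq l
        simp only [Equiv.swap_apply_def]
        split_ifs <;> omega
      simp only [Rc, e0.2 hpq, e2]
      have f1 := hlt j (j+1) (by omega) (by omega)
      have f2 := hlt (j+1) j (by omega) (by omega)
      simp only [Function.comp_apply, f1, f2]
      rfl

/-! ### Linking with matrices -/

/-- Chain word with the auxiliary letter at place `m + j`. -/
def chW {n N : ℕ} (m j : ℕ) (o : ℕ → ℕ) (r : Fin n) (s : Fin N → Fin n) : ℕ → ℕ := fun p =>
  if p < m then o p else if p < m + j then (if h : p - m < N then (s ⟨p - m, h⟩ : ℕ) else 0)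
  else if p = m + j then r else (if h : p - m - 1 < N then (s ⟨p - m - 1, h⟩ : ℕ) else 0)

/-- Chain word without auxiliary letter. -/
def chS {n N : ℕ} (m : ℕ) (o : ℕ → ℕ) (s : Fin N → Fin n) : ℕ → ℕ := fun p =>
  if p < m then o p else (if h : p - m < N then (s ⟨p - m, h⟩ : ℕ) else 0)

theorem chW_step [Field F] {n N : ℕ} (β u τ : F) (m : ℕ) (o : ℕ → ℕ) (j : Fin N)
    (Ψ : (ℕ → ℕ) → F) :
    Matrix.vecMul (fun x : Fin n × (Fin N → Fin n) => Ψ (chW m (j + 1) o x.1 x.2))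
      (Rsite n N β u τ j) =
    fun x => Rc β (om β u τ) (m + j) Ψ (chW m j o x.1 x.2) := by
  funext ⟨r, s⟩
  have hj := j.isLt
  have w1 : chW m (j + 1) o (s j) (Function.update s j r) = chW m j o r s := by
    funext p
    simp only [chW]
    by_cases c1 : p < m
    · simp [c1]
    by_cases c2 : p < m + j
    · have : p - m < N := by omega
      rw [if_neg c1, if_neg c1, if_pos c2, if_pos (by omega), dif_pos this, dif_pos this,
        Function.update_of_ne]
      intro hh
      have := congrArg Fin.val hh
      simp at this; omega
    by_cases c3 : p = m + j
    · subst c3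
      simp
    by_cases c4 : p = m + j + 1
    · subst c4
      have : m + j + 1 - m - 1 = j := by omega
      simp [this, add_assoc]
    · rw [if_neg c1, if_neg c1, if_neg c2, if_neg c3, if_neg (by omega), if_neg (by omega)]
      by_cases c5 : p - m - 1 < N
      · rw [dif_pos c5, dif_pos c5, Function.update_of_ne]
        intro hh
        have := congrArg Fin.val hh
        simp at this; omega
      · rw [dif_neg c5, dif_neg c5]
  have w2 : chW m (j + 1) o r s = chW m j o r s ∘ Equiv.swap (m + j) (m + j + 1) := by
    funext p
    simp only [chW, Function.comp]
    by_cases c3 : p = m + j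
    · subst c3
      have : m + (j:ℕ) + 1 - m - 1 = j := by omega
      simp [this]
      intro; omega
    by_cases c4 : p = m + j + 1
    · subst c4
      simp [add_assoc]
    · rw [Equiv.swap_apply_of_ne_of_ne c3 c4]
      by_cases c1 : p < m
      · simp [c1]
      by_cases c2 : p < m + j
      · simp [c1, c2, show p < m + (j + 1) by omega]
      · rw [if_neg c1, if_neg c1, if_neg c2, if_neg c3, if_neg (by omega), if_neg (by omega)]
  have v1 : chW m j o r s (m + j) = r := by simp [chW]
  have v2 : chW m j o r s (m + j + 1) = s j := by
    have : m + (j:ℕ) + 1 - m - 1 = j := by omega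
    simp [chW, this, add_assoc]
  simp only [Rc, v1, v2]
  rw [← w2]
  have key : ∀ x : Fin n × (Fin N → Fin n),
      Rsite n N β u τ j x (r, s) =
      (if x = (s j, Function.update s j r) then (if r < s j then 1 + β * om β u τ else 1) else 0) +
      (if x = (r, s) then (if s j < r then om β u τ else 0) else 0) := by
    rintro ⟨r', s'⟩
    simp only [Rsite, Rmat, Matrix.of_apply]
    have q1 : (r', s') = (s j, Function.update s j r) ↔
        ((r' = s j ∧ s' j = r) ∧ ∀ k, k ≠ j → s' k = s k) := by
      rw [Prod.mk.injEq, Function.eq_update_iff]; tauto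
    have q2 : (r', s') = (r, s) ↔ ((r' = r ∧ s' j = s j) ∧ ∀ k, k ≠ j → s' k = s k) := by
      rw [Prod.mk.injEq]
      constructor
      · rintro ⟨rfl, rfl⟩; simp
      · rintro ⟨⟨rfl, h1⟩, h2⟩
        refine ⟨rfl, funext fun k => ?_⟩
        by_cases hk : k = j
        · rw [hk, h1]
        · exact h2 k hk
    simp only [q1, q2]
    by_cases hh : ∀ k, k ≠ j → s' k = s k
    · have hh' := eq_true hh
      simp only [hh', and_true]
      by_cases c1 : s j < r <;> simp [c1]
    · simp only [hh, and_false, if_false, mul_zero, add_zero]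
  simp only [Matrix.vecMul, dotProduct, key, mul_add, Finset.sum_add_distrib, mul_ite, mul_zero,
    Finset.sum_ite_eq', Finset.mem_univ, if_true, Finset.sum_ite_eq, w1]
  simp only [Fin.lt_def]
  split_ifs <;> ring

theorem prod_rev_rec {G : Type*} [Monoid G] (f : ℕ → G) (j : ℕ) :
    (List.ofFn fun i : Fin (j + 1) => f i).reverse.prod =
      f j * (List.ofFn fun i : Fin j => f i).reverse.prod := by
  rw [List.ofFn_succ']
  simp

theorem prod_rec {G : Type*} [Monoid G] (f : ℕ → G) (j : ℕ) :
    (List.ofFn fun i : Fin (j + 1) => f i).prod =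
      (List.ofFn fun i : Fin j => f i).prod * f j := by
  rw [List.ofFn_succ']
  simp

theorem chW_mono [Field F] {n N : ℕ} (β u : F) (t : Fin N → F) (τ : ℕ → F)
    (hτ : ∀ i : Fin N, τ i = t i) (m : ℕ) (o : ℕ → ℕ) (Ψ : (ℕ → ℕ) → F) :
    Matrix.vecMul (fun x : Fin n × (Fin N → Fin n) => Ψ (chW m N o x.1 x.2))
      (Tmono n N β u t) =
    fun x => Yc β u τ m N Ψ (chW m 0 o x.1 x.2) := by
  set f : ℕ → Matrix (Fin n × (Fin N → Fin n)) (Fin n × (Fin N → Fin n)) F := fun i =>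
    if h : i < N then Rsite n N β u (t ⟨i, h⟩) ⟨i, h⟩ else 1 with hf
  have hT : Tmono n N β u t = (List.ofFn fun i : Fin N => f i).reverse.prod := by
    unfold Tmono
    congr 3
    funext i
    simp [hf]
  rw [hT]
  have : ∀ j, j ≤ N → ∀ Ψ : (ℕ → ℕ) → F,
      Matrix.vecMul (fun x : Fin n × (Fin N → Fin n) => Ψ (chW m j o x.1 x.2))
        ((List.ofFn fun i : Fin j => f i).reverse.prod) =
      fun x => Yc β u τ m j Ψ (chW m 0 o x.1 x.2) := by
    intro j
    induction j with
    | zero => intro _ Ψ; simp [Yc]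
    | succ j ih =>
      intro hj Ψ
      rw [prod_rev_rec, ← Matrix.vecMul_vecMul]
      have e := chW_step (n := n) β u (t ⟨j, hj⟩) m o ⟨j, hj⟩ Ψ
      have e' : f j = Rsite n N β u (t ⟨j, hj⟩) ⟨j, hj⟩ := by
        simp only [hf]; rw [dif_pos (show j < N from hj)]
      rw [e', e, ih (by omega) (Rc β (om β u (t ⟨j, hj⟩)) (m + j) Ψ)]
      simp only [Yc]
      rw [← hτ]
  exact this N le_rfl Ψ

theorem chS_block [Field F] {n N : ℕ} [NeZero n] (β u : F) (t : Fin N → F) (τ : ℕ → F)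
    (hτ : ∀ i : Fin N, τ i = t i) (m : ℕ) (o : ℕ → ℕ) (c : Fin n) (ho : o m = c)
    (Ψ : (ℕ → ℕ) → F) (hΨ : TailV (m + N) Ψ) :
    Matrix.vecMul (fun s : Fin N → Fin n => Ψ (chS m o s)) (blockOp n N β u t 0 c) =
      fun s => Yc β u τ m N Ψ (chS (m + 1) o s) := by
  funext s'
  have h := congrFun (chW_mono (n := n) β u t τ hτ m o Ψ) (c, s')
  have w : chW m 0 o c s' = chS (m + 1) o s' := by
    funext p
    simp only [chW, chS]
    by_cases c1 : p < m
    · simp [c1, show p < m + 1 by omega]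
    · by_cases c2 : p = m
      · subst c2; simp [ho]
      · simp only [c1, if_false, show ¬ p < m + 0 by omega, show ¬ p = m + 0 by omega,
          show ¬ p < m + 1 by omega]
        rfl
  simp only [w] at h
  rw [← h]
  simp only [Matrix.vecMul, dotProduct, blockOp, Matrix.of_apply]
  rw [Fintype.sum_prod_type, Finset.sum_eq_single (0 : Fin n)]
  · refine Finset.sum_congr rfl fun s _ => ?_
    congr 2
    funext p
    simp only [chW, chS]
    by_cases c1 : p < m
    · simp [c1]
    · rw [if_neg c1, if_neg c1]
      by_cases c2 : p < m + N
      · rw [if_pos c2]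
      · rw [if_neg c2, dif_neg (show ¬ p - m < N by omega)]
        by_cases c3 : p = m + N
        · simp [c3]
        · rw [if_neg c3, dif_neg (by omega)]
  · intro b _ hb
    refine Finset.sum_eq_zero fun s _ => ?_
    rw [hΨ _ (m + N) le_rfl, zero_mul]
    simpa [chW] using hb
  · simp

theorem chS_all [Field F] {n N : ℕ} [NeZero n] (β : F) (t : Fin N → F) (τ : ℕ → F)
    (hτ : ∀ i : Fin N, τ i = t i) (ς : ℕ → F) (o : ℕ → Fin n)
    (Ψ : (ℕ → ℕ) → F) (hΨ : TailV N Ψ) (m : ℕ) :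
    Matrix.vecMul (fun s : Fin N → Fin n => Ψ (chS 0 (fun p => o p) s))
      ((List.ofFn fun a : Fin m => blockOp n N β (ς a) t 0 (o a)).prod) =
      fun s => Sc N β ς τ Ψ m (chS m (fun p => o p) s) := by
  induction m with
  | zero => simp [Sc]
  | succ m ih =>
    rw [prod_rec (fun a => blockOp n N β (ς a) t 0 (o a)), ← Matrix.vecMul_vecMul, ih,
      chS_block β (ς m) t τ hτ m (fun p => o p) (o m) rfl _ (TailV_Sc N β ς τ Ψ hΨ m)]
    rfl

theorem length_pos {N : ℕ} (ii : Fin N) (π : Equiv.Perm (Fin (N + 1)))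
    (hlen : permLength π < permLength (Equiv.swap ii.castSucc ii.succ * π)) :
    π.symm ii.castSucc < π.symm ii.succ := by
  by_contra hc
  unfold permLength at hlen
  refine absurd hlen (not_lt.2 (Finset.card_le_card ?_))
  intro x hpq
  obtain ⟨p, q⟩ := x
  rw [Finset.mem_filter] at hpq ⊢
  simp only [Finset.mem_univ, true_and, Equiv.Perm.coe_mul, Function.comp] at hpq ⊢
  obtain ⟨h1, h2⟩ := hpq
  refine ⟨h1, ?_⟩
  by_cases hh : π p = ii.castSucc ∧ π q = ii.succ
  · exfalso; apply hc
    rw [← hh.1, ← hh.2]; simpa using h1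
  · have hne : π p ≠ π q := fun h => by
      have := π.injective h; omega
    simp only [Equiv.swap_apply_def] at h2
    simp only [Fin.ext_iff, Fin.lt_def, Fin.val_castSucc, Fin.val_succ, ne_eq] at *
    split_ifs at h2 <;> simp at h2 <;> omega

/-- Indicator of a word. -/
def indW [Field F] (w : ℕ → ℕ) : (ℕ → ℕ) → F :=
  open Classical in fun f => if f = w then 1 else 0

/-- Labelled infinite word of a finite word. -/
def labW {n N : ℕ} (s : Fin N → Fin n) : ℕ → ℕ := fun p =>
  if h : p < N then (s ⟨p, h⟩ : ℕ) + 1 else 0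

theorem chS_zero_eq {n N : ℕ} (o : ℕ → ℕ) (s : Fin N → Fin n) :
    chS 0 o s = fun p => labW s p - 1 := by
  funext p
  simp only [chS, labW]
  by_cases h : p < N <;> simp [h]

theorem chS_zero_inj {n N : ℕ} (o o' : ℕ → ℕ) (s s' : Fin N → Fin n)
    (h : chS 0 o s = chS 0 o' s') : s = s' := by
  funext i
  have := congrFun h i
  simpa [chS, Fin.ext_iff] using this

theorem labW_good {N : ℕ} (π : Equiv.Perm (Fin (N + 1))) : GoodW (labW fun j => π j) := by
  refine ⟨(π.symm 0 : Fin (N + 1)), ?_, ?_⟩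
  · intro k
    simp only [labW]
    split_ifs with h
    · constructor
      · intro hk
        have : π ⟨k, h⟩ = 0 := Fin.ext (by simpa using hk)
        rw [← this]; simp
      · intro hk
        have : (⟨k, h⟩ : Fin (N + 1)) = π.symm 0 := Fin.ext hk
        rw [this]; simp
    · have := (π.symm 0).isLt
      constructor
      · intro hk; exact hk.elim
      · intro hk; exact absurd (hk ▸ this) h
  · intro k hk
    have := (π.symm 0).isLt
    simp [labW, show k < N + 1 by omega]

theorem LabRel_init [Field F] {N : ℕ} (π : Equiv.Perm (Fin (N + 1))) :
    LabRel (F := F) (indW fun k => labW (fun j => π j) k - 1) (indW (labW fun j => π j)) := by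
  have hw := labW_good π
  have hinj : ∀ p q, p ≠ q → labW (fun j => π j) p = labW (fun j => π j) q →
      labW (fun j => π j) p ≠ 0 → False := by
    intro p q hpq h1 h2
    simp only [labW] at h1 h2
    split_ifs at h1 h2 with c1 c2
    · have : π ⟨p, c1⟩ = π ⟨q, c2⟩ := Fin.ext (by omega)
      exact hpq (by simpa using this)
    all_goals omega
  set w := labW fun j => π j
  obtain ⟨p0, hp0, hp0'⟩ := hw
  refine ⟨?_, ?_, ?_⟩
  · rintro f ⟨p, hp, hp'⟩
    have : ((fun k => f k - 1) = fun k => w k - 1) ↔ f = w := by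
      constructor
      · intro h
        have h' : ∀ k, f k - 1 = w k - 1 := fun k => congrFun h k
        have hpp : p = p0 := by
          rcases lt_trichotomy p p0 with hlt | heq | hlt
          · have := hp0' p hlt
            have := h' p
            have := (hp p).2 rfl
            have := (hp0 p)
            omega
          · exact heq
          · have := hp' p0 hlt
            have := h' p0
            have := (hp0 p0).2 rfl
            have := (hp p0)
            omega
        subst hpp
        funext k
        have := h' k
        have := hp k
        have := hp0 k
        omega
      · rintro rfl; rfl
    simp only [indW]
    by_cases hh : f = w
    · rw [if_pos hh, if_pos (this.2 hh)]
    · rw [if_neg hh, if_neg (mt this.1 hh)]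
  · intro f p q hpq h0 h1
    simp only [indW]
    rw [if_neg]
    rintro rfl
    have := (hp0 q).1 h1
    exact hp0' p (by omega) h0
  · intro f p q hpq h1 h2
    simp only [indW]
    rw [if_neg]
    rintro rfl
    exact hinj p q hpq h1 h2

theorem LabRel_lin [Field F] (β : F) (A B A' B' : (ℕ → ℕ) → F) (h : LabRel A B)
    (h' : LabRel A' B') :
    LabRel (fun f => A f + β * A' f) (fun f => B f + β * B' f) := by
  obtain ⟨a1, a2, a3⟩ := h
  obtain ⟨b1, b2, b3⟩ := h'
  refine ⟨fun f hf => ?_, fun f p q h1 h2 h3 => ?_, fun f p q h1 h2 h3 => ?_⟩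
  · simp only [a1 f hf, b1 f hf]
  · simp [a2 f p q h1 h2 h3, b2 f p q h1 h2 h3]
  · simp [a3 f p q h1 h2 h3, b3 f p q h1 h2 h3]

theorem labW_swap {N : ℕ} (ii : Fin N) (π : Equiv.Perm (Fin (N + 1))) :
    labW (fun j => (Equiv.swap ii.castSucc ii.succ * π) j) =
      Equiv.swap ((ii : ℕ) + 1) (ii + 1 + 1) ∘ labW (fun j => π j) := by
  funext p
  simp only [labW, Function.comp, Equiv.Perm.coe_mul]
  split_ifs with h
  · simp only [Equiv.swap_apply_def, Fin.ext_iff, Fin.val_castSucc, Fin.val_succ]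
    split_ifs <;> simp at * <;> omega
  · rw [Equiv.swap_apply_of_ne_of_ne] <;> omega

theorem HeckeRel_init [Field F] (β : F) {N : ℕ} (ii : Fin N) (π : Equiv.Perm (Fin (N + 1)))
    (hpos : π.symm ii.castSucc < π.symm ii.succ) :
    HeckeRel β ((ii : ℕ) + 1) (indW (labW fun j => π j))
      (fun f => indW (labW fun j => (Equiv.swap ii.castSucc ii.succ * π) j) f +
        β * indW (labW fun j => π j) f) := by
  rw [labW_swap]
  have w1 : labW (fun j => π j) (π.symm ii.castSucc : Fin (N + 1)) = ii + 1 := by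
    have := (π.symm ii.castSucc).isLt
    simp [labW]; omega
  have w2 : labW (fun j => π j) (π.symm ii.succ : Fin (N + 1)) = ii + 1 + 1 := by
    have := (π.symm ii.succ).isLt
    simp [labW]; omega
  set w := labW fun j => π j
  have hpos' : ((π.symm ii.castSucc : Fin (N + 1)) : ℕ) < (π.symm ii.succ : Fin (N + 1)) := hpos
  generalize ((π.symm ii.castSucc : Fin (N + 1)) : ℕ) = P at w1 hpos'
  generalize ((π.symm ii.succ : Fin (N + 1)) : ℕ) = Q at w2 hpos'
  intro g p q hp hq
  constructor
  · intro hpq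
    have : g ≠ Equiv.swap ((ii : ℕ) + 1) (ii + 1 + 1) ∘ w := by
      intro hg
      have e1 := (hq P).1 (by rw [hg]; simp [w1])
      have e2 := (hp Q).1 (by rw [hg]; simp [w2])
      omega
    simp [indW, this]
  · intro hqp
    have : g ≠ w := by
      rintro hg
      have e1 := (hp P).1 (by rw [hg, w1])
      have e2 := (hq Q).1 (by rw [hg, w2])
      omega
    have e : (g = Equiv.swap ((ii : ℕ) + 1) (ii + 1 + 1) ∘ w) ↔
        (Equiv.swap ((ii : ℕ) + 1) (ii + 1 + 1) ∘ g = w) := by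
      constructor
      · intro hh; rw [hh]; funext k; simp
      · intro hh; rw [← hh]; funext k; simp
    simp only [indW]
    rw [if_neg this, mul_zero, add_zero]
    by_cases hh : g = Equiv.swap ((ii : ℕ) + 1) (ii + 1 + 1) ∘ w
    · rw [if_pos hh, if_pos (e.1 hh)]
    · rw [if_neg hh, if_neg (mt e.2 hh)]

theorem TailV_ind [Field F] {n N : ℕ} (s : Fin N → Fin n) :
    TailV (F := F) N (indW fun k => labW s k - 1) := by
  intro f p hp hf
  simp only [indW]
  rw [if_neg]
  rintro rfl
  apply hf
  simp [labW, show ¬ p < N by omega]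

theorem ket_eq [Field F] {n N : ℕ} (s : Fin N → Fin n) (o : ℕ → ℕ) :
    ket (F := F) n N s = fun z => indW (fun k => labW s k - 1) (chS 0 o z) := by
  funext z
  simp only [ket, indW]
  rw [← chS_zero_eq o]
  by_cases h : z = s
  · simp [h]
  · rw [if_neg h, if_neg]
    intro hh
    exact h (chS_zero_inj _ _ _ _ hh)

/-- Combinatorial core: reading off the exchanged outputs. -/
theorem read_off [Field F] (β : F) (i m : ℕ) (Au A Bu B : (ℕ → ℕ) → F)
    (hA : LabRel Au A) (hB : LabRel Bu B) (hAB : HeckeRel β (i + 1) A B)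
    (g g' : ℕ → ℕ) (hpre : ∀ k, k < m + 1 → g k ≠ 0) (h1 : g m = i + 1)
    (h2 : g (m + 1) = i) (hgg : g' = g ∘ Equiv.swap m (m + 1)) (hz : ∃ k, g k = 0) :
    Bu g = Au g' := by
  classical
  set f : ℕ → ℕ := fun k => if g k = 0 then (if ∀ l, l < k → g l ≠ 0 then 1 else 0) else g k + 1
    with hf
  have fg : (fun k => f k - 1) = g := by
    funext k
    simp only [hf]
    split_ifs <;> omega
  have f1 : f m = i + 1 + 1 := by simp [hf, h1]
  have f2 : f (m + 1) = i + 1 := by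
    simp only [hf]
    by_cases hi : i = 0
    · rw [if_pos (by omega), if_pos hpre, hi]
    · rw [if_neg (by omega), h2]
  have hpre' : ∀ k, k < m + 1 → f k ≠ 1 := by
    intro k hk
    have := hpre k hk
    simp only [hf]
    rw [if_neg this]
    omega
  have fgood : GoodW f := by
    refine ⟨Nat.find hz, ?_, ?_⟩
    · intro k
      rw [eq_comm (a := k), Nat.find_eq_iff]
      simp only [hf]
      by_cases c1 : g k = 0
      · by_cases c2 : ∀ l, l < k → g l ≠ 0
        · rw [if_pos c1, if_pos c2]; exact ⟨fun _ => ⟨c1, c2⟩, fun _ => rfl⟩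
        · rw [if_pos c1, if_neg c2]
          exact ⟨fun h => by omega, fun h => absurd h.2 c2⟩
      · rw [if_neg c1]
        exact ⟨fun h => by omega, fun h => absurd h.1 c1⟩
    · intro k hk
      have := Nat.find_min hz hk
      simp only [hf]
      rw [if_neg this]
      omega
  have fgood' : GoodW (f ∘ Equiv.swap m (m + 1)) := by
    obtain ⟨p, q1, q2⟩ := fgood
    have hp : m + 1 ≤ p := by
      by_contra hc
      exact hpre' p (by omega) ((q1 p).2 rfl)
    refine ⟨Equiv.swap m (m + 1) p, ?_, ?_⟩
    · intro k
      simp only [Function.comp, q1]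
      rw [Equiv.swap_apply_eq_iff]
    · intro k hk
      have := swap_lt_swap (j := m) hk (by
        rintro ⟨rfl, h2⟩
        rw [Equiv.swap_apply_eq_iff] at h2
        simp at h2; omega)
      rw [Equiv.swap_apply_self] at this
      exact q2 _ this
  have fg' : (fun k => (f ∘ Equiv.swap m (m + 1)) k - 1) = g' := by
    rw [hgg]; funext k; exact congrFun fg (Equiv.swap m (m + 1) k)
  have eB := hB.1 f fgood
  have eA := hA.1 _ fgood'
  rw [fg] at eB
  rw [fg'] at eA
  rw [eA, eB]
  by_cases hu : (∀ k, f k = i + 1 ↔ k = m + 1) ∧ (∀ k, f k = i + 1 + 1 ↔ k = m)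
  · obtain ⟨u1, u2⟩ := hu
    rw [(hAB f _ _ u1 u2).2 (by omega)]
    congr 1
    funext k
    by_cases c1 : k = m
    · subst c1; simp [f1, f2]
    by_cases c2 : k = m + 1
    · subst c2; simp [f1, f2]
    simp only [Function.comp]
    rw [Equiv.swap_apply_of_ne_of_ne c1 c2, Equiv.swap_apply_of_ne_of_ne]
    · rw [Ne, u1]; exact c2
    · rw [Ne, u2]; exact c1
  · have hrep : ∃ p q, p ≠ q ∧ f p = f q ∧ f p ≠ 0 := by
      by_contra hc
      push Not at hc
      apply hu
      constructor
      · intro k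
        constructor
        · intro hk
          by_contra hne
          have := hc k (m + 1) hne (by omega)
          omega
        · rintro rfl; exact f2
      · intro k
        constructor
        · intro hk
          by_contra hne
          have := hc k m hne (by omega)
          omega
        · rintro rfl; exact f1
    obtain ⟨p, q, r1, r2, r3⟩ := hrep
    rw [hB.2.2 f p q r1 r2 r3, hA.2.2 (f ∘ Equiv.swap m (m + 1)) (Equiv.swap m (m + 1) p)
      (Equiv.swap m (m + 1) q) (by simpa using r1) (by simpa using r2) (by simpa using r3)]

/-- **Lemma `l3`**: with `n = N = M+2` and `1 ≤ i ≤ N-1` (`i = ii+1`), if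
`ℓ(s_i π) > ℓ(π)` (where `s_i` exchanges the letters `i-1` and `i` of the
`0`-based alphabet), then
`(⟨s_iπ| + β⟨π|) B_{N-1}(σ_1) ⋯ B_{i+1}(σ_{N-i-1}) B_i(σ_{N-i}) B_{i-1}(σ_{N-i+1})
 = ⟨π| B_{N-1}(σ_1) ⋯ B_{i+1}(σ_{N-i-1}) B_{i-1}(σ_{N-i}) B_i(σ_{N-i+1})`. -/
theorem bra_exchange [Field F] [CharZero F] (M : ℕ) (β : F)
    (σ t : Fin (M + 2) → F)
    (hind : AlgebraicIndependent ℚ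
      (Sum.elim (fun _ : Unit => β) (Sum.elim σ t)))
    (ii : Fin (M + 1)) (π : Equiv.Perm (Fin (M + 2)))
    (hlen : permLength π < permLength (Equiv.swap ii.castSucc ii.succ * π)) :
    Matrix.vecMul
        (ket (M + 2) (M + 2) (fun j => (Equiv.swap ii.castSucc ii.succ * π) j) +
          β • ket (M + 2) (M + 2) fun j => π j)
        (topString M β t σ (M - (ii : ℕ)) (by omega) *
          blockOp (M + 2) (M + 2) β (σ ⟨M - (ii : ℕ), by omega⟩) t 0 ii.succ *
          blockOp (M + 2) (M + 2) β (σ ⟨M + 1 - (ii : ℕ), by omega⟩) t 0 ii.castSucc) =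
      Matrix.vecMul (ket (M + 2) (M + 2) fun j => π j)
        (topString M β t σ (M - (ii : ℕ)) (by omega) *
          blockOp (M + 2) (M + 2) β (σ ⟨M - (ii : ℕ), by omega⟩) t 0 ii.castSucc *
          blockOp (M + 2) (M + 2) β (σ ⟨M + 1 - (ii : ℕ), by omega⟩) t 0 ii.succ) := by
  have hpos := length_pos ii π hlen
  have hii := ii.isLt
  set τ : ℕ → F := fun k => if h : k < M + 2 then t ⟨k, h⟩ else 0 with hτdef
  set ς : ℕ → F := fun k => if h : k < M + 2 then σ ⟨k, h⟩ else 0 with hςdef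
  have hτ : ∀ i : Fin (M + 2), τ i = t i := by intro i; simp [hτdef]
  have hς : ∀ k (h : k < M + 2), σ ⟨k, h⟩ = ς k := by
    intro k h; simp only [hςdef]; rw [dif_pos h]
  set o : ℕ → Fin (M + 2) := fun p => ⟨M + 1 - p, by omega⟩ with ho
  set d : ℕ := M - ii with hd
  set o' : ℕ → Fin (M + 2) := o ∘ Equiv.swap d (d + 1) with ho'
  have od : o d = ii.succ := by
    apply Fin.ext; simp only [ho, hd, Fin.val_succ]; omega
  have od1 : o (d + 1) = ii.castSucc := by
    apply Fin.ext; simp only [ho, hd, Fin.val_castSucc]; omega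
  have od' : o' d = ii.castSucc := by simp [ho', od1]
  have od1' : o' (d + 1) = ii.succ := by simp [ho', od]
  have e1 : M + 1 - (ii : ℕ) = d + 1 := by omega
  have hprod : ∀ q : ℕ → Fin (M + 2), (∀ k, k < d → q k = o k) →
      topString M β t σ d (by omega) *
        blockOp (M + 2) (M + 2) β (ς d) t 0 (q d) *
        blockOp (M + 2) (M + 2) β (ς (d + 1)) t 0 (q (d + 1)) =
      (List.ofFn fun a : Fin (d + 2) => blockOp (M + 2) (M + 2) β (ς a) t 0 (q a)).prod := by
    intro q hq
    rw [prod_rec (fun a => blockOp (M + 2) (M + 2) β (ς a) t 0 (q a)),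
      prod_rec (fun a => blockOp (M + 2) (M + 2) β (ς a) t 0 (q a))]
    congr 2
    unfold topString
    congr 2
    funext a
    rw [hq a a.isLt, hς]
  have hL := hprod o (fun _ _ => rfl)
  have hR := hprod o' (fun k hk => by
    simp only [ho', Function.comp]
    rw [Equiv.swap_apply_of_ne_of_ne (by omega) (by omega)])
  rw [od, od1] at hL
  rw [od', od1'] at hR
  simp only [e1, hς]
  rw [hL, hR]
  set π' := Equiv.swap ii.castSucc ii.succ * π with hπ'
  set Au : (ℕ → ℕ) → F := indW fun k => labW (fun j => π j) k - 1 with hAu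
  set Bu : (ℕ → ℕ) → F := fun f => (indW fun k => labW (fun j => π' j) k - 1) f + β * Au f
    with hBu
  have tA : TailV (M + 2) Au := TailV_ind _
  have tB : TailV (M + 2) Bu := by
    intro f p hp hf
    simp only [hBu]
    rw [tA f p hp hf, TailV_ind (F := F) (fun j => π' j) f p hp hf]
    simp
  have kA : (ket (M + 2) (M + 2) fun j => π j) =
      fun z : Fin (M + 2) → Fin (M + 2) => Au (chS 0 (fun p => o' p) z) := ket_eq _ _
  have kB : ket (M + 2) (M + 2) (fun j => π' j) + β • (ket (M + 2) (M + 2) fun j => π j) =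
      fun z : Fin (M + 2) → Fin (M + 2) => Bu (chS 0 (fun p => o p) z) := by
    rw [ket_eq (F := F) (fun j => π' j) (fun p => o p),
      ket_eq (F := F) (fun j => π j) (fun p => o p)]
    rfl
  rw [kB, kA, chS_all β t τ hτ ς o Bu tB (d + 2), chS_all β t τ hτ ς o' Au tA (d + 2)]
  have lA : LabRel Au (indW (labW fun j => π j)) := LabRel_init π
  have lB : LabRel Bu (fun f => indW (labW fun j => π' j) f + β * indW (labW fun j => π j) f) :=
    LabRel_lin β _ _ _ _ (LabRel_init π') lA
  have hAB := HeckeRel_init β ii π hpos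
  funext z
  refine read_off β ii d _ _ _ _
    (Sc_pres (M + 2) β ς τ _ (LabRel_Rc β) _ _ lA (d + 2))
    (Sc_pres (M + 2) β ς τ _ (LabRel_Rc β) _ _ lB (d + 2))
    (Sc_pres (M + 2) β ς τ _ (HeckeRel_Rc β (ii + 1)) _ _ hAB (d + 2)) _ _ ?_ ?_ ?_ ?_ ?_
  · intro k hk
    simp only [chS, ho]
    rw [if_pos (by omega)]
    omega
  · simp [chS, od]
  · simp [chS, od1]
  · funext k
    simp only [chS, Function.comp, ho']
    by_cases c1 : k = d
    · subst c1; simp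
    by_cases c2 : k = d + 1
    · rw [c2]; simp
    · rw [Equiv.swap_apply_of_ne_of_ne c1 c2]
  · refine ⟨d + 2 + (M + 2), ?_⟩
    simp [chS]
end
end
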